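/- arXiv:2107.09824 — 10 statements merged into one kernel-verified Lean document; each statement's English description precedes it below -/
import Mathlib

section
/- For every n ≥ 1 and every z ∈ ℂ with Im z > 0, one has P_n(z) ≠ 0 and 0 > Im(P_{n−1}(z)/P_n(z)) ≥ −1/Im z; and for every z with Im z < 0, one has P_n(z) ≠ 0 and 0 < Im(P_{n−1}(z)/P_n(z)) ≤ −1/Im z. -/
open Polynomial

/-!
For a fixed non-real `z`, the successive quotients `w n = P (n + 1) z / P n z` satisfy the
continued-fraction recursion `w (n + 1) = (z - c (n + 2)) - lam (n + 2) / w n`. Since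
`Im (1 / w) = -Im w / |w|²` and `lam (n + 2) > 0`, induction gives `Im (w n) = (1 + t) Im z` for
some `t ≥ 0`, which treats both half-planes at once (`exists_quotient`). In particular
`|Im (w n)| ≥ |Im z| > 0`, so no `P n z` vanishes, and `P n z / P (n + 1) z = 1 / w n` has
imaginary part of sign opposite to `Im z` and of modulus at most
`1 / |Im (w n)| ≤ 1 / |Im z|` (`inv_im_bounds`).
-/

/-- The parameter `t` records that `w.im` has the sign of `z.im` and at least its modulus. -/
lemma exists_quotient
    (c lam : ℕ → ℝ) (hlam : ∀ n, 2 ≤ n → 0 < lam n)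
    (P : ℕ → Polynomial ℂ)
    (hP0 : P 0 = 1) (hP1 : P 1 = X - C (c 1 : ℂ))
    (hPrec : ∀ n : ℕ, P (n + 2) =
      (X - C (c (n + 2) : ℂ)) * P (n + 1) - C (lam (n + 2) : ℂ) * P n)
    (z : ℂ) (hz : z.im ≠ 0) (n : ℕ) :
    (P n).eval z ≠ 0 ∧ ∃ (w : ℂ) (t : ℝ), 0 ≤ t ∧ w.im = (1 + t) * z.im ∧
      (P (n + 1)).eval z = (P n).eval z * w := by
  induction n with
  | zero => exact ⟨by simp [hP0], z - c 1, 0, le_rfl, by simp, by simp [hP0, hP1]⟩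
  | succ n ih =>
    obtain ⟨hn, w, t, ht, him, hw⟩ := ih
    have hw0 : w ≠ 0 := by
      rintro rfl
      rw [Complex.zero_im] at him
      exact mul_ne_zero (by positivity) hz him.symm
    have hl := hlam (n + 2) (by omega)
    have hN : 0 < Complex.normSq w := Complex.normSq_pos.mpr hw0
    refine ⟨by rw [hw]; exact mul_ne_zero hn hw0, z - c (n + 2) - lam (n + 2) * w⁻¹,
      lam (n + 2) * (1 + t) / Complex.normSq w, by positivity, ?_, ?_⟩
    · simp only [Complex.sub_im, Complex.ofReal_im, Complex.im_ofReal_mul, Complex.inv_im, him]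
      field_simp
      ring
    · rw [hPrec, eval_sub, eval_mul, eval_mul, eval_sub, eval_X, eval_C, eval_C, hw]
      field_simp

lemma inv_im_bounds {w : ℂ} {y : ℝ} (hy : 0 < y) (h : y ≤ w.im) :
    w⁻¹.im < 0 ∧ -(1 / y) ≤ w⁻¹.im := by
  have hN : w.im * w.im ≤ Complex.normSq w := by
    rw [Complex.normSq_apply]; nlinarith [mul_self_nonneg w.re]
  have hw : 0 < w.im := hy.trans_le h
  have hN0 : 0 < Complex.normSq w := (mul_pos hw hw).trans_le hN
  rw [Complex.inv_im, neg_div]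
  refine ⟨neg_neg_of_pos (by positivity), neg_le_neg ?_⟩
  rw [div_le_div_iff₀ hN0 hy]
  nlinarith

/-- Proposition 2.1 (i)+(ii): for the monic orthogonal polynomials of a
positive-definite functional, `P n z ≠ 0` off the real line and the imaginary
part of `P (n-1) z / P n z` lies in the stated range. -/
theorem stmt_0
    (c lam : ℕ → ℝ) (hlam : ∀ n, 2 ≤ n → 0 < lam n)
    (P : ℕ → Polynomial ℂ)
    (hP0 : P 0 = 1) (hP1 : P 1 = X - C (c 1 : ℂ))
    (hPrec : ∀ n : ℕ, P (n + 2) =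
      (X - C (c (n + 2) : ℂ)) * P (n + 1) - C (lam (n + 2) : ℂ) * P n) :
    ∀ n : ℕ, 1 ≤ n → ∀ z : ℂ,
      (0 < z.im →
        (P n).eval z ≠ 0 ∧
        ((P (n - 1)).eval z / (P n).eval z).im < 0 ∧
        -(1 / z.im) ≤ ((P (n - 1)).eval z / (P n).eval z).im) ∧
      (z.im < 0 →
        (P n).eval z ≠ 0 ∧
        0 < ((P (n - 1)).eval z / (P n).eval z).im ∧
        ((P (n - 1)).eval z / (P n).eval z).im ≤ -(1 / z.im)) := by
  intro n hn z
  obtain ⟨n, rfl⟩ : ∃ m, n = m + 1 := ⟨n - 1, by omega⟩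
  rw [Nat.add_sub_cancel]
  have key := exists_quotient c lam hlam P hP0 hP1 hPrec z
  constructor
  · intro hz
    obtain ⟨h0, w, t, ht, him, hw⟩ := key hz.ne' n
    have hq : (P n).eval z / (P (n + 1)).eval z = w⁻¹ := by
      rw [hw, div_mul_cancel_left₀ h0]
    rw [hq]
    exact ⟨(key hz.ne' (n + 1)).1, inv_im_bounds hz (by rw [him]; nlinarith)⟩
  · intro hz
    obtain ⟨h0, w, t, ht, him, hw⟩ := key hz.ne n
    have hq : (P n).eval z / (P (n + 1)).eval z = w⁻¹ := by
      rw [hw, div_mul_cancel_left₀ h0]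
    rw [hq]
    -- The lower half-plane reduces to the upper one through `w ↦ -w`.
    have hb := inv_im_bounds (w := -w) (y := -z.im) (by linarith)
      (by rw [Complex.neg_im, him]; nlinarith)
    rw [inv_neg, Complex.neg_im, div_neg] at hb
    exact ⟨(key hz.ne (n + 1)).1, by linarith [hb.1], by linarith [hb.2]⟩
end

section
/- Suppose c_n → c and λ_n → a as n → ∞ (Nevai class N(a,c)), let κ ∈ ℂ be non-real, and assume (as holds automatically in the Nevai class by Nevai's ratio-asymptotic theorem) that the sequence P_{n+1}(κ)/P_n(κ) converges in ℂ. Then the Christoffel-transformed coefficients satisfy λ*_n(κ) → a and c*_n(κ) → c as n → ∞. -/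
open Polynomial Filter

/-!
Put `r n = P (n + 1) (κ) / P n (κ)`. The recurrence gives
`r (n + 1) = κ - c (n + 2) - lam (n + 2) / r n`, and since `lam (n + 2) > 0`, the map
`w ↦ -lam / w` preserves the upper and the lower half-plane. Hence `Im (r n)` has the sign of
`Im κ` and `|Im (r n)| ≥ |Im κ|` for all `n` (`ratio_im`), so the limit `L` of `r` is nonzero.
The transformed coefficients are `lam (n + 1) * r n / r (n - 1)` and
`c (n + 2) - r n + r (n + 1)`, whose limits are `a * L / L = a` and `cc - L + L = cc`.
-/

/-- The imaginary part of the ratio `p (n + 1) / p n` has the sign of `Im κ` and is at least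
as large in absolute value; `p n` stands for the value `P n (κ)`. -/
lemma ratio_im (c lam : ℕ → ℝ) (hlam : ∀ n, 2 ≤ n → 0 < lam n) (κ : ℂ) (hκ : κ.im ≠ 0)
    (p : ℕ → ℂ) (h0 : p 0 = 1) (h1 : p 1 = κ - c 1)
    (hrec : ∀ n, p (n + 2) = (κ - c (n + 2)) * p (n + 1) - lam (n + 2) * p n) (n : ℕ) :
    p n ≠ 0 ∧ κ.im ^ 2 ≤ (p (n + 1) / p n).im * κ.im := by
  induction n with
  | zero => simp [h0, h1, sq]
  | succ n ih =>
    obtain ⟨hn, hr⟩ := ih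
    have hpos : 0 < κ.im ^ 2 := by positivity
    have hne : p (n + 1) ≠ 0 := by
      intro h
      simp only [h, zero_div, Complex.zero_im, zero_mul] at hr
      exact absurd hr (not_le.mpr hpos)
    refine ⟨hne, ?_⟩
    have key : p (n + 1 + 1) / p (n + 1)
        = κ - c (n + 2) - lam (n + 2) * (p (n + 1) / p n)⁻¹ := by
      rw [show n + 1 + 1 = n + 2 from rfl, hrec]
      field_simp
    rw [key]
    generalize p (n + 1) / p n = r at hr
    have hl := hlam (n + 2) (by omega)
    have him : (κ - c (n + 2) - lam (n + 2) * r⁻¹).im * κ.im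
        = κ.im ^ 2 + lam (n + 2) * (r.im * κ.im / Complex.normSq r) := by
      simp only [Complex.sub_im, Complex.ofReal_im, Complex.im_ofReal_mul, Complex.inv_im]
      ring
    rw [him]
    have : 0 ≤ r.im * κ.im / Complex.normSq r :=
      div_nonneg (hpos.le.trans hr) (Complex.normSq_nonneg r)
    have := mul_nonneg hl.le this
    linarith

/-- Proposition 3.3: the Nevai class `N(a,c)` is invariant under the Christoffel
transformation at a non-real point `κ`: the transformed coefficients
`λ*ₙ(κ) → a` and `c*ₙ(κ) → c`. -/
theorem stmt_3
    (c lam : ℕ → ℝ) (hlam : ∀ n, 2 ≤ n → 0 < lam n)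
    (P : ℕ → Polynomial ℂ)
    (hP0 : P 0 = 1) (hP1 : P 1 = X - C (c 1 : ℂ))
    (hPrec : ∀ n : ℕ, P (n + 2) =
      (X - C (c (n + 2) : ℂ)) * P (n + 1) - C (lam (n + 2) : ℂ) * P n)
    (a cc : ℝ)
    (hc : Tendsto (fun n => c n) atTop (nhds cc))
    (hl : Tendsto (fun n => lam n) atTop (nhds a))
    (κ : ℂ) (hκ : κ.im ≠ 0)
    (hconv : ∃ L : ℂ,
      Tendsto (fun n => (P (n + 1)).eval κ / (P n).eval κ) atTop (nhds L)) :
    Tendsto (fun n => (lam (n + 1) : ℂ) * (P (n + 1)).eval κ * (P (n - 1)).eval κ /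
        ((P n).eval κ) ^ 2) atTop (nhds (a : ℂ)) ∧
    Tendsto (fun n => (c (n + 2) : ℂ) - (P (n + 1)).eval κ / (P n).eval κ +
        (P (n + 2)).eval κ / (P (n + 1)).eval κ) atTop (nhds (cc : ℂ)) := by
  obtain ⟨L, hL⟩ := hconv
  have hr := ratio_im c lam hlam κ hκ (fun n => (P n).eval κ) (by simp [hP0]) (by simp [hP1])
    (fun n => by simp [hPrec])
  have hL0 : L ≠ 0 := by
    rintro rfl
    have h : Tendsto (fun n => ((P (n + 1)).eval κ / (P n).eval κ).im * κ.im) atTop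
        (nhds ((0 : ℂ).im * κ.im)) :=
      ((Complex.continuous_im.tendsto _).comp hL).mul_const _
    have := ge_of_tendsto' h (fun n => (hr n).2)
    simp only [Complex.zero_im, zero_mul] at this
    exact absurd this (not_le.mpr (by positivity))
  have hL1 := hL.comp (tendsto_add_atTop_nat 1)
  have hc' := ((Complex.continuous_ofReal.tendsto _).comp hc).comp (tendsto_add_atTop_nat 2)
  have hl' := ((Complex.continuous_ofReal.tendsto _).comp hl).comp (tendsto_add_atTop_nat 2)
  constructor
  · -- Shifting the index by one removes the truncated subtraction `n - 1`.
    rw [← tendsto_add_atTop_iff_nat 1]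
    have h := (hl'.mul hL1).div hL hL0
    rw [mul_div_cancel_right₀ _ hL0] at h
    refine h.congr fun n => ?_
    have hn := (hr n).1
    have hn1 := (hr (n + 1)).1
    simp only [Function.comp, Pi.div_apply, add_tsub_cancel_right] at *
    field_simp
  · have h := (hc'.sub hL).add hL1
    rw [sub_add_cancel] at h
    exact h
end

section
/- Let κ₁, κ₂ ∈ ℂ with Im κ₁ > 0 and Im κ₂ < 0. Then for every n ≥ 0 the determinant Δ_n(κ₁,κ₂) = P_{n+1}(κ₁)·P_n(κ₂) − P_n(κ₁)·P_{n+1}(κ₂) is nonzero; equivalently, P*_n(κ₁, κ₂) ≠ 0 for every n ≥ 0, so the two-point (iterated) Christoffel transformation at κ₁ and κ₂ exists. -/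
open Polynomial

/-!
Everything follows from a sign property: `Im (P_{n+1}(z) * conj (P_n(z)))` has the strict sign of
`Im z`. It satisfies the recursion
`Im (P_{n+2} * conj P_{n+1}) = Im z * |P_{n+1}|² + lam_{n+2} * Im (P_{n+1} * conj P_n)`
with initial value `Im z`, so the sign propagates by induction (`sign_im`). In particular `P_n` has no
non-real zeros, and the ratio `P_{n+1}/P_n` maps each open half-plane into itself. Vanishing of
`Δ_n(κ₁, κ₂)` would mean that this ratio takes the same value at `κ₁` and `κ₂`, which lie in opposite
half-planes. The kernel polynomial then satisfies
`P_n(κ₁) * (κ₂ - κ₁) * P*_n(κ₁, κ₂) = -Δ_n(κ₁, κ₂)`.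
-/

/-- `Im (P_{n+1}(z) * conj (P_n(z)))`, written out in coordinates, has the sign of `Im z`; the factor `s`
is used with `s = 1` and `s = -1` to treat both half-planes at once. -/
lemma sign_im (c lam : ℕ → ℝ) (hlam : ∀ n, 2 ≤ n → 0 < lam n)
    (P : ℕ → Polynomial ℂ)
    (hP0 : P 0 = 1) (hP1 : P 1 = X - C (c 1 : ℂ))
    (hPrec : ∀ n : ℕ, P (n + 2) =
      (X - C (c (n + 2) : ℂ)) * P (n + 1) - C (lam (n + 2) : ℂ) * P n)
    (z : ℂ) (s : ℝ) (hz : 0 < s * z.im) (n : ℕ) :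
    0 < s * (((P (n + 1)).eval z).im * ((P n).eval z).re
      - ((P (n + 1)).eval z).re * ((P n).eval z).im) := by
  induction n with
  | zero => simpa [hP0, hP1] using hz
  | succ n ih =>
    have hl := hlam (n + 2) (by omega)
    have e : (P (n + 1 + 1)).eval z =
        (z - (c (n + 2) : ℂ)) * (P (n + 1)).eval z - (lam (n + 2) : ℂ) * (P n).eval z := by
      rw [hPrec n]; simp
    rw [e]
    have h1 := mul_pos hl ih
    have h2 : 0 ≤ s * z.im * (((P (n + 1)).eval z).re ^ 2 + ((P (n + 1)).eval z).im ^ 2) := by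
      positivity
    simp only [Complex.sub_re, Complex.sub_im, Complex.mul_re, Complex.mul_im,
      Complex.ofReal_re, Complex.ofReal_im]
    linarith

/-- Pairs `(a, b)` and `(x, y)` with `Im (a * conj b) > 0 > Im (x * conj y)` are not proportional. -/
lemma det_ne_zero_of_im (a b x y : ℂ) (h1 : 0 < a.im * b.re - a.re * b.im)
    (h2 : x.im * y.re - x.re * y.im < 0) : a * y - b * x ≠ 0 := by
  intro h
  have hy : 0 < y.re ^ 2 + y.im ^ 2 := by
    by_contra hc
    have e1 : y.re = 0 := by nlinarith [sq_nonneg y.re, sq_nonneg y.im]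
    have e2 : y.im = 0 := by nlinarith [sq_nonneg y.re, sq_nonneg y.im]
    simp [e1, e2] at h2
  have hr := congrArg Complex.re h
  have hi := congrArg Complex.im h
  simp only [Complex.sub_re, Complex.sub_im, Complex.mul_re, Complex.mul_im,
    Complex.zero_re, Complex.zero_im] at hr hi
  -- Imaginary part of `(a * y - b * x) * conj b * conj y = 0`.
  have key : (a.im * b.re - a.re * b.im) * (y.re ^ 2 + y.im ^ 2)
      = (b.re ^ 2 + b.im ^ 2) * (x.im * y.re - x.re * y.im) := by
    linear_combination (b.re * y.re - b.im * y.im) * hi - (b.re * y.im + b.im * y.re) * hr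
  have := mul_pos h1 hy
  nlinarith [mul_nonneg (add_nonneg (sq_nonneg b.re) (sq_nonneg b.im)) (neg_pos.2 h2).le]

/-- Theorem 3.9 (existence part): for `Im κ₁ > 0` and `Im κ₂ < 0`, the
determinants `Δₙ(κ₁,κ₂) = P_{n+1}(κ₁)·Pₙ(κ₂) − Pₙ(κ₁)·P_{n+1}(κ₂)` are nonzero;
equivalently the kernel polynomials at `κ₁` do not vanish at `κ₂`, so the
two-point Christoffel transformation exists. -/
theorem stmt_7
    (c lam : ℕ → ℝ) (hlam : ∀ n, 2 ≤ n → 0 < lam n)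
    (P : ℕ → Polynomial ℂ)
    (hP0 : P 0 = 1) (hP1 : P 1 = X - C (c 1 : ℂ))
    (hPrec : ∀ n : ℕ, P (n + 2) =
      (X - C (c (n + 2) : ℂ)) * P (n + 1) - C (lam (n + 2) : ℂ) * P n)
    (κ₁ κ₂ : ℂ) (hκ₁ : 0 < κ₁.im) (hκ₂ : κ₂.im < 0)
    (Ps : ℕ → Polynomial ℂ)
    (hPs : ∀ n : ℕ, (X - C κ₁) * Ps n =
      P (n + 1) - C ((P (n + 1)).eval κ₁ / (P n).eval κ₁) * P n) :
    ∀ n : ℕ,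
      (P (n + 1)).eval κ₁ * (P n).eval κ₂ - (P n).eval κ₁ * (P (n + 1)).eval κ₂ ≠ 0 ∧
      (Ps n).eval κ₂ ≠ 0 := by
  intro n
  have h1 := sign_im c lam hlam P hP0 hP1 hPrec κ₁ 1 (by linarith) n
  have h2 := sign_im c lam hlam P hP0 hP1 hPrec κ₂ (-1) (by linarith) n
  have hD := det_ne_zero_of_im ((P (n + 1)).eval κ₁) ((P n).eval κ₁)
    ((P (n + 1)).eval κ₂) ((P n).eval κ₂) (by linarith) (by linarith)
  refine ⟨hD, fun h => hD ?_⟩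
  have hne : (P n).eval κ₁ ≠ 0 := by
    intro h0
    simp [h0] at h1
  have e := congrArg (eval κ₂) (hPs n)
  simp only [eval_mul, eval_sub, eval_X, eval_C, h, mul_zero] at e
  field_simp at e
  linear_combination e
end

section
/- Let κ, s ∈ ℂ with s ≠ 0, and suppose either Im κ > 0 and Im s ≤ 0, or Im κ < 0 and Im s ≥ 0. Then s·P_n(κ) + Q_n(κ) ≠ 0 for every n ≥ 0 (so the Geronimus transformation at κ with parameter s is quasi-definite). -/
/-!
Put `R n = s * P n (κ) + Q n (κ)`. Since the recurrence has real coefficients `c`, `lam`,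
`Im (R (n+2) * conj (R (n+1))) = Im κ * |R (n+1)|² + lam (n+2) * Im (R (n+1) * conj (R n))`,
and `Im (R 1 * conj (R 0)) = |s|² * Im κ - Im s`. With `lam > 0` and the sign condition on `s`,
the product `Im κ * Im (R (n+1) * conj (R n))` is therefore positive for every `n`
by induction, which forces `R n ≠ 0`.
-/

open Polynomial

/-- Theorem 4.2: if `Im κ > 0` and `Im s ≤ 0` (or `Im κ < 0` and `Im s ≥ 0`),
`s ≠ 0`, then `s·Pₙ(κ) + Qₙ(κ) ≠ 0` for all `n`, so the Geronimus
transformation at `κ` with parameter `s` is quasi-definite. -/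
theorem stmt_8
    (c lam : ℕ → ℝ) (hlam : ∀ n, 2 ≤ n → 0 < lam n)
    (P : ℕ → Polynomial ℂ)
    (hP0 : P 0 = 1) (hP1 : P 1 = X - C (c 1 : ℂ))
    (hPrec : ∀ n : ℕ, P (n + 2) =
      (X - C (c (n + 2) : ℂ)) * P (n + 1) - C (lam (n + 2) : ℂ) * P n)
    (Q : ℕ → Polynomial ℂ)
    (hQ0 : Q 0 = 0) (hQ1 : Q 1 = 1)
    (hQrec : ∀ n : ℕ, Q (n + 2) =
      (X - C (c (n + 2) : ℂ)) * Q (n + 1) - C (lam (n + 2) : ℂ) * Q n)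
    (κ s : ℂ) (hs : s ≠ 0)
    (hsign : (0 < κ.im ∧ s.im ≤ 0) ∨ (κ.im < 0 ∧ 0 ≤ s.im)) :
    ∀ n : ℕ, s * (P n).eval κ + (Q n).eval κ ≠ 0 := by
  have hκ : 0 < κ.im * κ.im := by
    rcases hsign with h | h <;> nlinarith [h.1]
  have hκs : κ.im * s.im ≤ 0 := by
    rcases hsign with h | h <;> nlinarith [h.1, h.2]
  obtain ⟨R, hR⟩ : ∃ R : ℕ → ℂ, ∀ n, R n = s * (P n).eval κ + (Q n).eval κ := ⟨_, fun _ => rfl⟩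
  have hR0 : R 0 = s := by simp [hR, hP0, hQ0]
  have hR1 : R 1 = s * (κ - (c 1 : ℂ)) + 1 := by simp [hR, hP1, hQ1]
  have hRrec : ∀ n, R (n + 2) = (κ - (c (n + 2) : ℂ)) * R (n + 1) - (lam (n + 2) : ℂ) * R n := by
    intro n
    simp only [hR, hPrec, hQrec, eval_sub, eval_mul, eval_X, eval_C]
    ring
  -- The parenthesised factor is `Im (R (n+1) * conj (R n))`.
  have key : ∀ n, 0 < κ.im * ((R (n + 1)).im * (R n).re - (R (n + 1)).re * (R n).im) := by
    intro n
    induction n with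
    | zero =>
      have hs' : 0 < Complex.normSq s := Complex.normSq_pos.mpr hs
      rw [Complex.normSq_apply] at hs'
      rw [zero_add, hR1, hR0]
      simp only [Complex.add_im, Complex.add_re, Complex.mul_im, Complex.mul_re, Complex.sub_im,
        Complex.sub_re, Complex.ofReal_im, Complex.ofReal_re, Complex.one_im, Complex.one_re]
      nlinarith [mul_pos hκ hs']
    | succ n ih =>
      have hl := mul_pos (hlam (n + 2) (by omega)) ih
      have hsq : 0 ≤ (R (n + 1)).re * (R (n + 1)).re + (R (n + 1)).im * (R (n + 1)).im := by
        exact add_nonneg (mul_self_nonneg _) (mul_self_nonneg _)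
      rw [show n + 1 + 1 = n + 2 from rfl, hRrec n]
      simp only [Complex.mul_im, Complex.mul_re, Complex.sub_im,
        Complex.sub_re, Complex.ofReal_im, Complex.ofReal_re]
      nlinarith [mul_nonneg hκ.le hsq]
  intro n hn
  have h := key n
  rw [← hR] at hn
  simp [hn] at h
end

section
/- Suppose c_n → c and λ_n → a as n → ∞ (Nevai class N(a,c)), let κ ∈ ℂ be non-real and s ∈ ℂ∖{0} be such that R_n(κ) ≠ 0 for all n ≥ 0, and assume (as follows from Nevai's and Markov's theorems) that P_{n+1}(κ)/P_n(κ) converges and that Q_n(κ)/P_n(κ) converges to some w with s + w ≠ 0. Then the Geronimus-transformed coefficients λ^{−*}_{n+1} = λ_n·R_n(κ)·R_{n−2}(κ)/R_{n−1}(κ)² and c^{−*}_{n+1} = c_{n+1} − R_n(κ)/R_{n−1}(κ) + R_{n+1}(κ)/R_n(κ) satisfy λ^{−*}_n → a and c^{−*}_n → c as n → ∞. -/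
/-!
Write `p n = P n (κ)`. The ratios `r n = p (n + 1) / p n` satisfy
`r (n + 1) = κ - c (n + 2) - lam (n + 2) / r n`, and since `lam > 0` the map `r ↦ -lam / r` preserves
the half-plane containing `κ`. Hence `im r n` has the sign of `im κ` and modulus at least `|im κ|`
(`ratio_im_bound`). So no `p n` vanishes, and the limit `L` of `r n` is non-real, in particular nonzero.
Now `R n / p n → 1 + w / s ≠ 0`, so `R (n + 1) / R n` also tends to `L ≠ 0`
(`tendsto_ratio_of_tendsto_div`). The factor multiplying `lam n` is a quotient of two consecutive such
ratios, hence tends to `1`; the correction to `c (n + 1)` is a difference of two of them, hence tends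
to `0`.
-/

open Polynomial Filter

open Topology

/-- The values `p n = P n (κ)` at a non-real point never vanish, and their consecutive
ratios stay in the closed half-plane bounded by `im z = im κ` away from the real axis. -/
theorem ratio_im_bound (c lam : ℕ → ℝ) (hlam : ∀ n, 2 ≤ n → 0 < lam n) (κ : ℂ) (hκ : κ.im ≠ 0)
    (p : ℕ → ℂ) (hp0 : p 0 = 1) (hp1 : p 1 = κ - c 1)
    (hrec : ∀ n, p (n + 2) = (κ - c (n + 2)) * p (n + 1) - lam (n + 2) * p n) (n : ℕ) :
    p n ≠ 0 ∧ κ.im ^ 2 ≤ κ.im * (p (n + 1) / p n).im := by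
  have hpos : 0 < κ.im ^ 2 := by positivity
  induction n with
  | zero => simp [hp0, hp1, sq]
  | succ n ih =>
    obtain ⟨h0, h1⟩ := ih
    have hne : p (n + 1) ≠ 0 := by
      intro h
      simp only [h, zero_div, Complex.zero_im, mul_zero] at h1
      linarith
    refine ⟨hne, ?_⟩
    have hr : p (n + 1 + 1) / p (n + 1)
        = κ - c (n + 2) - lam (n + 2) * (p (n + 1) / p n)⁻¹ := by
      rw [hrec n]
      field_simp
    rw [hr]
    set r := p (n + 1) / p n
    have him : (κ - c (n + 2) - lam (n + 2) * r⁻¹ : ℂ).im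
        = κ.im + lam (n + 2) * (r.im / Complex.normSq r) := by
      simp [Complex.inv_im]
      ring
    have hl := hlam (n + 2) (by omega)
    have hnn : 0 ≤ lam (n + 2) * ((κ.im * r.im) / Complex.normSq r) :=
      mul_nonneg hl.le (div_nonneg (by linarith) (Complex.normSq_nonneg r))
    rw [him]
    calc κ.im ^ 2 ≤ κ.im ^ 2 + lam (n + 2) * ((κ.im * r.im) / Complex.normSq r) := by linarith
      _ = _ := by ring

/-- Ratio asymptotics pass from `p` to `R` when `R / p` has a nonzero limit. -/
theorem tendsto_ratio_of_tendsto_div (p R : ℕ → ℂ) (hp : ∀ n, p n ≠ 0) (hR : ∀ n, R n ≠ 0)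
    {L u : ℂ} (hu : u ≠ 0) (hL : Tendsto (fun n => p (n + 1) / p n) atTop (𝓝 L))
    (hRp : Tendsto (fun n => R n / p n) atTop (𝓝 u)) :
    Tendsto (fun n => R (n + 1) / R n) atTop (𝓝 L) := by
  have h := (hL.mul ((hRp.comp (tendsto_add_atTop_nat 1)).div hRp hu))
  rw [div_self hu, mul_one] at h
  refine h.congr fun n => ?_
  have h1 := hp n
  have h2 := hp (n + 1)
  have h3 := hR n
  simp only [Function.comp, Pi.div_apply]
  field_simp

/-- Proposition 4.5: the Nevai class `N(a,c)` is invariant under the Geronimus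
transformation at a non-real point `κ`: the transformed coefficients
`λ⁻*ₙ → a` and `c⁻*ₙ → c`. -/
theorem stmt_10
    (c lam : ℕ → ℝ) (hlam : ∀ n, 2 ≤ n → 0 < lam n)
    (P : ℕ → Polynomial ℂ)
    (hP0 : P 0 = 1) (hP1 : P 1 = X - C (c 1 : ℂ))
    (hPrec : ∀ n : ℕ, P (n + 2) =
      (X - C (c (n + 2) : ℂ)) * P (n + 1) - C (lam (n + 2) : ℂ) * P n)
    (Q : ℕ → Polynomial ℂ)
    (hQ0 : Q 0 = 0) (hQ1 : Q 1 = 1)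
    (hQrec : ∀ n : ℕ, Q (n + 2) =
      (X - C (c (n + 2) : ℂ)) * Q (n + 1) - C (lam (n + 2) : ℂ) * Q n)
    (a cc : ℝ)
    (hc : Tendsto (fun n => c n) atTop (nhds cc))
    (hl : Tendsto (fun n => lam n) atTop (nhds a))
    (κ : ℂ) (hκ : κ.im ≠ 0) (s : ℂ) (hs : s ≠ 0)
    (Rκ : ℕ → ℂ)
    (hRκ : ∀ n, Rκ n = (P n).eval κ + 1 / s * (Q n).eval κ)
    (hRne : ∀ n, Rκ n ≠ 0)
    (hconv : ∃ L : ℂ,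
      Tendsto (fun n => (P (n + 1)).eval κ / (P n).eval κ) atTop (nhds L))
    (hMarkov : ∃ w : ℂ,
      Tendsto (fun n => (Q n).eval κ / (P n).eval κ) atTop (nhds w) ∧
      s + w ≠ 0) :
    Tendsto (fun n => (lam n : ℂ) * Rκ n * Rκ (n - 2) / (Rκ (n - 1)) ^ 2)
        atTop (nhds (a : ℂ)) ∧
    Tendsto (fun n => (c (n + 1) : ℂ) - Rκ n / Rκ (n - 1) + Rκ (n + 1) / Rκ n)
        atTop (nhds (cc : ℂ)) := by
  obtain ⟨L, hL⟩ := hconv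
  obtain ⟨w, hw, hsw⟩ := hMarkov
  have key := ratio_im_bound c lam hlam κ hκ (fun n => (P n).eval κ) (by simp [hP0])
    (by simp [hP1]) (fun n => by simp [hPrec n])
  have hL0 : L ≠ 0 := by
    have h1 : κ.im ^ 2 ≤ κ.im * L.im :=
      ge_of_tendsto' (((Complex.continuous_im.tendsto L).comp hL).const_mul κ.im)
        fun n => (key n).2
    rintro rfl
    have : 0 < κ.im ^ 2 := by positivity
    simp only [Complex.zero_im, mul_zero] at h1
    linarith
  have hu : 1 + 1 / s * w ≠ 0 := by
    intro h
    apply hsw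
    field_simp at h
    simpa using h
  have hRp : Tendsto (fun n => Rκ n / (P n).eval κ) atTop (𝓝 (1 + 1 / s * w)) := by
    refine ((hw.const_mul (1 / s)).const_add 1).congr fun n => ?_
    have := (key n).1
    rw [hRκ n]
    field_simp
  have hρ := tendsto_ratio_of_tendsto_div (fun n => (P n).eval κ) Rκ (fun n => (key n).1) hRne
    hu hL hRp
  have hρ1 := hρ.comp (tendsto_add_atTop_nat 1)
  have hlC : Tendsto (fun n => (lam n : ℂ)) atTop (𝓝 (a : ℂ)) :=
    (Complex.continuous_ofReal.tendsto a).comp hl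
  have hcC : Tendsto (fun n => (c n : ℂ)) atTop (𝓝 (cc : ℂ)) :=
    (Complex.continuous_ofReal.tendsto cc).comp hc
  constructor
  · -- Shifting by two makes the truncated subtractions genuine.
    rw [← tendsto_add_atTop_iff_nat 2]
    have h := (hlC.comp (tendsto_add_atTop_nat 2)).mul (hρ1.div hρ hL0)
    rw [div_self hL0, mul_one] at h
    refine h.congr fun n => ?_
    have h0 := hRne n
    have h1 := hRne (n + 1)
    simp only [Function.comp, Pi.div_apply, Nat.add_sub_cancel, Nat.add_assoc,
      show n + 2 - 1 = n + 1 from rfl]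
    field_simp
  · rw [← tendsto_add_atTop_iff_nat 1]
    have h := ((hcC.comp (tendsto_add_atTop_nat 2)).sub hρ).add hρ1
    rw [sub_add_cancel] at h
    exact h
end

section
/- Let s ∈ ℝ∖{0} and let κ ∈ ℂ be non-real, so that R_n(κ) ≠ 0 for all n and the Geronimus-transformed polynomials P^{−*}_n(κ,·) are defined. If Im κ > 0, then for every n ≥ 1 every zero z₀ of P^{−*}_n(κ,·) satisfies 0 < Im z₀ ≤ −1/Im(R_{n−1}(κ)/R_n(κ)); if Im κ < 0, then every zero z₀ of P^{−*}_n(κ,·) satisfies −1/Im(R_{n−1}(κ)/R_n(κ)) ≤ Im z₀ < 0. In particular P^{−*}_n(κ,·) has no real zeros. -/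
/-!
For a solution `u` of the three-term recurrence at the point `z` with real initial data, the
Wronskian-type quantity `Im (uₙ₊₁ * conj uₙ)` satisfies
`Im (uₙ₊₂ * conj uₙ₊₁) = Im z * |uₙ₊₁|² + λₙ₊₂ * Im (uₙ₊₁ * conj uₙ)`, hence equals
`Im z * (|uₙ|² + t)` for some `t ≥ 0` (`im_mul_conj_eq`). Thus `Im (uₙ₊₁ / uₙ)` has the sign of
`Im z` and is at least `Im z` in absolute value.

A zero `z₀` of the Geronimus polynomial satisfies `Pₙ₊₁(z₀) = w * Pₙ(z₀)` with
`w = Rₙ₊₁(κ) / Rₙ(κ)`. The identity for `R` at `κ` shows that `Im w` has the sign of `Im κ`; the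
identity for `P` at `z₀` then shows that `Im z₀` has the same sign and `|Im z₀| ≤ |Im w|`.
Finally `|Im w| ≤ |w|² / |Im w| = |1 / Im (1 / w)|`.
-/

open Polynomial

open ComplexConjugate in
theorem im_mul_conj_eq (c lam : ℕ → ℝ) (hlam : ∀ n, 2 ≤ n → 0 < lam n) (z : ℂ) (a : ℝ)
    (u : ℕ → ℂ) (h0 : u 0 = 1) (h1 : u 1 = z - a)
    (hrec : ∀ n, u (n + 2) = (z - c (n + 2)) * u (n + 1) - lam (n + 2) * u n) (n : ℕ) :
    ∃ t : ℝ, 0 ≤ t ∧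
      (u (n + 1) * conj (u n)).im = z.im * (Complex.normSq (u n) + t) := by
  induction n with
  | zero => exact ⟨0, le_rfl, by simp [h0, h1]⟩
  | succ n ih =>
    obtain ⟨t, ht, h⟩ := ih
    refine ⟨lam (n + 2) * (Complex.normSq (u n) + t), ?_, ?_⟩
    · exact mul_nonneg (hlam _ (by omega)).le (add_nonneg (Complex.normSq_nonneg _) ht)
    · rw [hrec n]
      simp only [Complex.mul_im, Complex.mul_re, Complex.sub_im, Complex.sub_re, Complex.conj_re,
        Complex.conj_im, Complex.ofReal_re, Complex.ofReal_im, Complex.normSq_apply] at h ⊢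
      linear_combination lam (n + 2) * h

theorem recurrence_not_both_zero (c lam : ℕ → ℝ) (hlam : ∀ n, 2 ≤ n → 0 < lam n) (z : ℂ)
    (u : ℕ → ℂ) (h0 : u 0 = 1)
    (hrec : ∀ n, u (n + 2) = (z - c (n + 2)) * u (n + 1) - lam (n + 2) * u n) (n : ℕ) :
    ¬ (u n = 0 ∧ u (n + 1) = 0) := by
  induction n with
  | zero => simp [h0]
  | succ n ih =>
    rintro ⟨h1, h2⟩
    have hl : (lam (n + 2) : ℂ) ≠ 0 := by exact_mod_cast (hlam (n + 2) (by omega)).ne'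
    have := hrec n
    rw [h1, h2] at this
    simp [hl] at this
    exact ih ⟨this, h1⟩

theorem recurrence_ne_zero (c lam : ℕ → ℝ) (hlam : ∀ n, 2 ≤ n → 0 < lam n) (z : ℂ)
    (hz : z.im ≠ 0) (a : ℝ) (u : ℕ → ℂ) (h0 : u 0 = 1) (h1 : u 1 = z - a)
    (hrec : ∀ n, u (n + 2) = (z - c (n + 2)) * u (n + 1) - lam (n + 2) * u n) (n : ℕ) :
    u n ≠ 0 := by
  induction n with
  | zero => simp [h0]
  | succ n ih =>
    intro h
    obtain ⟨t, ht, hh⟩ := im_mul_conj_eq c lam hlam z a u h0 h1 hrec n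
    have hp := Complex.normSq_pos.mpr ih
    rw [h] at hh
    simp only [zero_mul, Complex.zero_im] at hh
    rcases mul_eq_zero.mp hh.symm with h' | h'
    · exact hz h'
    · linarith

/-- At points where two consecutive values have ratio `w`, the imaginary part of `w` is that of
`z` stretched by a factor at least `1`. -/
theorem im_ratio (c lam : ℕ → ℝ) (hlam : ∀ n, 2 ≤ n → 0 < lam n) (z : ℂ) (a : ℝ)
    (u : ℕ → ℂ) (h0 : u 0 = 1) (h1 : u 1 = z - a)
    (hrec : ∀ n, u (n + 2) = (z - c (n + 2)) * u (n + 1) - lam (n + 2) * u n) (n : ℕ)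
    (w : ℂ) (hw : u (n + 1) = w * u n) :
    ∃ k : ℝ, 1 ≤ k ∧ w.im = z.im * k := by
  have hne : u n ≠ 0 := fun h =>
    recurrence_not_both_zero c lam hlam z u h0 hrec n ⟨h, by rw [hw, h, mul_zero]⟩
  have hp := Complex.normSq_pos.mpr hne
  obtain ⟨t, ht, hh⟩ := im_mul_conj_eq c lam hlam z a u h0 h1 hrec n
  rw [hw, mul_assoc, Complex.mul_conj, Complex.im_mul_ofReal] at hh
  refine ⟨1 + t / Complex.normSq (u n), by have := div_nonneg ht hp.le; linarith, ?_⟩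
  field_simp
  linarith

/-- Theorem 4.7: for real `s ≠ 0` and non-real `κ`, the zeros of the Geronimus
transformed polynomials `P⁻*ₙ(κ,·)` lie in the horizontal strip
`0 < Im z ≤ -1/Im(R_{n-1}(κ)/R_n(κ))` when `Im κ > 0`, and in the reflected
strip when `Im κ < 0`; in particular they have no real zeros. -/
theorem stmt_11
    (c lam : ℕ → ℝ) (hlam : ∀ n, 2 ≤ n → 0 < lam n)
    (P : ℕ → Polynomial ℂ)
    (hP0 : P 0 = 1) (hP1 : P 1 = X - C (c 1 : ℂ))
    (hPrec : ∀ n : ℕ, P (n + 2) =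
      (X - C (c (n + 2) : ℂ)) * P (n + 1) - C (lam (n + 2) : ℂ) * P n)
    (Q : ℕ → Polynomial ℂ)
    (hQ0 : Q 0 = 0) (hQ1 : Q 1 = 1)
    (hQrec : ∀ n : ℕ, Q (n + 2) =
      (X - C (c (n + 2) : ℂ)) * Q (n + 1) - C (lam (n + 2) : ℂ) * Q n)
    (s : ℝ) (hs : s ≠ 0)
    (κ : ℂ) (hκ : κ.im ≠ 0)
    (Rκ : ℕ → ℂ)
    (hRκ : ∀ n, Rκ n = (P n).eval κ + 1 / (s : ℂ) * (Q n).eval κ)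
    (Pm : ℕ → Polynomial ℂ)
    (hPm0 : Pm 0 = 1)
    (hPm : ∀ n : ℕ, 1 ≤ n → Pm n = P n - C (Rκ n / Rκ (n - 1)) * P (n - 1)) :
    ∀ n : ℕ, 1 ≤ n → ∀ z₀ : ℂ, (Pm n).eval z₀ = 0 →
      (0 < κ.im →
        0 < z₀.im ∧ z₀.im ≤ -(1 / (Rκ (n - 1) / Rκ n).im)) ∧
      (κ.im < 0 →
        z₀.im < 0 ∧ -(1 / (Rκ (n - 1) / Rκ n).im) ≤ z₀.im) := by
  intro n hn z₀ hz
  obtain ⟨m, rfl⟩ : ∃ m, n = m + 1 := ⟨n - 1, by omega⟩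
  rw [hPm _ hn] at hz
  simp only [Nat.add_sub_cancel] at hz ⊢
  have hR0 : Rκ 0 = 1 := by simp [hRκ, hP0, hQ0]
  have hR1 : Rκ 1 = κ - ((c 1 - 1 / s : ℝ) : ℂ) := by
    simp [hRκ, hP1, hQ1]; ring
  have hRrec : ∀ n, Rκ (n + 2) = (κ - c (n + 2)) * Rκ (n + 1) - lam (n + 2) * Rκ n := by
    intro n
    simp only [hRκ, hPrec, hQrec, eval_sub, eval_mul, eval_X, eval_C]
    ring
  have hRne := recurrence_ne_zero c lam hlam κ hκ _ Rκ hR0 hR1 hRrec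
  obtain ⟨w, hw⟩ : ∃ w, w = Rκ (m + 1) / Rκ m := ⟨_, rfl⟩
  obtain ⟨k, hk, hwk⟩ := im_ratio c lam hlam κ _ Rκ hR0 hR1 hRrec m w
    (by rw [hw, div_mul_cancel₀ _ (hRne m)])
  obtain ⟨l, hl, hwl⟩ := im_ratio c lam hlam z₀ (c 1) (fun n => (P n).eval z₀)
    (by simp [hP0]) (by simp [hP1]) (by intro n; simp [hPrec]) m w
    (by rw [hw]; simpa [sub_eq_zero] using hz)
  have hbound : -(1 / (Rκ m / Rκ (m + 1)).im) = Complex.normSq w / w.im := by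
    rw [← inv_div (Rκ (m + 1)) (Rκ m), ← hw, Complex.inv_im, one_div_div, div_neg, neg_neg]
  rw [hbound]
  have hsq : w.im * w.im ≤ Complex.normSq w := by
    rw [Complex.normSq_apply]; nlinarith [mul_self_nonneg w.re]
  constructor
  · intro h
    have hwpos : 0 < w.im := by rw [hwk]; positivity
    have hzpos : 0 < z₀.im := by
      rw [hwl] at hwpos
      exact pos_of_mul_pos_left hwpos (by linarith)
    refine ⟨hzpos, ?_⟩
    calc z₀.im ≤ w.im := by rw [hwl]; nlinarith
      _ ≤ _ := by rwa [le_div_iff₀ hwpos]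
  · intro h
    have hwneg : w.im < 0 := by rw [hwk]; nlinarith
    have hzneg : z₀.im < 0 := by
      by_contra! h'
      rw [hwl] at hwneg
      nlinarith
    refine ⟨hzneg, ?_⟩
    calc _ ≤ w.im := by rwa [div_le_iff_of_neg hwneg]
      _ ≤ z₀.im := by rw [hwl]; nlinarith
end

section
/- Let μ be a finite positive Borel measure on ℝ with compact support whose support is an infinite set, and let (P_n)_{n≥0} be monic real polynomials with deg P_n = n satisfying ∫ P_n(t)·t^m dμ(t) = 0 for all 0 ≤ m < n. Then for every κ ∈ ℂ with Im κ ≠ 0 and every n ≥ 0, ∫ P_n(t)/(t − κ) dμ(t) ≠ 0. (Consequently, the Geronimus transformation of μ at κ with parameter s₀* = ∫ dμ(t)/(t−κ) exists: with Q_n the associated second-kind polynomials, s₀*·P_n(κ) + Q_n(κ) ≠ 0 for all n.) -/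
open Polynomial MeasureTheory

/-!
Write `p = Pₙ` and divide over `ℂ`: `p = q · (X - κ) + p(κ)` with `deg q < n`. Multiplying by
`p(t) / (t - κ)` and integrating, orthogonality kills `∫ p q dμ`, so
`p(κ) ∫ p(t)/(t - κ) dμ = ∫ p(t)² / (t - κ) dμ`.
The imaginary part of the right-hand side is `Im κ · ∫ p(t)² / |t - κ|² dμ`, which is nonzero: if it
vanished, `p` would vanish `μ`-a.e., hence on the whole support of `μ`, which is infinite.
-/

/-- Every continuous function is integrable against a finite measure carried by a compact set. -/
lemma integrable_of_continuous_of_compact {E : Type*} [NormedAddCommGroup E]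
    {μ : Measure ℝ} [IsFiniteMeasure μ]
    (hcomp : ∃ K : Set ℝ, IsCompact K ∧ μ Kᶜ = 0) {f : ℝ → E} (hf : Continuous f) :
    Integrable f μ := by
  obtain ⟨K, hK, hμ⟩ := hcomp
  have h := hf.continuousOn.integrableOn_compact (μ := μ) hK
  rwa [IntegrableOn, Measure.restrict_eq_self_of_ae_mem (mem_ae_iff.mpr hμ)] at h

/-- Orthogonality to the monomials of degree `< n` passes to complex polynomials of degree `< n`. -/
lemma integral_mul_eval_eq_zero {μ : Measure ℝ} [IsFiniteMeasure μ]
    (hcomp : ∃ K : Set ℝ, IsCompact K ∧ μ Kᶜ = 0) (p : ℝ[X]) (n : ℕ)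
    (horth : ∀ m : ℕ, m < n → ∫ t, p.eval t * t ^ m ∂μ = 0) (q : ℂ[X]) (hq : q.degree < n) :
    ∫ t : ℝ, ((p.eval t : ℝ) : ℂ) * q.eval (t : ℂ) ∂μ = 0 := by
  have hfun : ∀ t : ℝ, ((p.eval t : ℝ) : ℂ) * q.eval (t : ℂ)
      = ∑ m ∈ q.support, q.coeff m * ((p.eval t * t ^ m : ℝ) : ℂ) := by
    intro t
    rw [eval_eq_sum (p := q), Polynomial.sum, Finset.mul_sum]
    refine Finset.sum_congr rfl fun m _ => ?_
    push_cast
    ring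
  simp_rw [hfun]
  rw [integral_finsetSum]
  · refine Finset.sum_eq_zero fun m hm => ?_
    have hmn : m < n := by
      exact_mod_cast (le_degree_of_ne_zero (mem_support_iff.mp hm)).trans_lt hq
    rw [integral_const_mul, integral_complex_ofReal, horth m hmn]
    simp
  · intro m _
    refine integrable_of_continuous_of_compact hcomp ?_
    exact continuous_const.mul (Complex.continuous_ofReal.comp
      (p.continuous.mul (continuous_id.pow m)))

/-- A real polynomial vanishing `μ`-a.e. vanishes on the support of `μ`, hence is zero when that
support is infinite. -/
lemma eq_zero_of_ae_eval_eq_zero {μ : Measure ℝ}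
    (hinf : {x : ℝ | ∀ U ∈ nhds x, 0 < μ U}.Infinite) (p : ℝ[X])
    (hp : ∀ᵐ t ∂μ, p.eval t = 0) : p = 0 := by
  refine eq_zero_of_infinite_isRoot p (hinf.mono fun x hx => ?_)
  by_contra hne
  have hopen : IsOpen {t : ℝ | p.eval t ≠ 0} := isOpen_ne_fun p.continuous continuous_const
  exact (hx _ (hopen.mem_nhds hne)).ne' (ae_iff.mp hp)

/-- Theorem 4.11 (first part): for a finite, compactly supported positive
measure `μ` on `ℝ` with infinite (topological) support, and its monic orthogonal
polynomials `Pₙ`, one has `∫ Pₙ(t)/(t − κ) dμ(t) ≠ 0` for every non-real `κ`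
and every `n`. -/
theorem stmt_14
    (μ : Measure ℝ) [IsFiniteMeasure μ]
    (hcomp : ∃ K : Set ℝ, IsCompact K ∧ μ Kᶜ = 0)
    (hinf : {x : ℝ | ∀ U ∈ nhds x, 0 < μ U}.Infinite)
    (P : ℕ → Polynomial ℝ)
    (hmonic : ∀ n, (P n).Monic)
    (hdeg : ∀ n, (P n).natDegree = n)
    (horth : ∀ n : ℕ, ∀ m : ℕ, m < n → ∫ t, (P n).eval t * t ^ m ∂μ = 0)
    (κ : ℂ) (hκ : κ.im ≠ 0) :
    ∀ n : ℕ, ∫ t, (((P n).eval t : ℝ) : ℂ) / ((t : ℂ) - κ) ∂μ ≠ 0 := by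
  intro n hzero
  set p := P n with hp
  have hp0 : p ≠ 0 := (hmonic n).ne_zero
  have hne : ∀ t : ℝ, (t : ℂ) - κ ≠ 0 := fun t h => hκ (by
    have := congrArg Complex.im h
    simpa using this)
  set pc : ℂ[X] := p.map Complex.ofRealHom with hpc
  set q : ℂ[X] := pc /ₘ (X - C κ) with hqdef
  have hpc0 : pc ≠ 0 := (Polynomial.map_ne_zero_iff Complex.ofRealHom.injective).mpr hp0
  have hq : q.degree < n := by
    have h := degree_divByMonic_lt pc (X - C κ) hpc0 (by simp)
    have hpn : pc.degree = n := by rw [hpc, degree_map, degree_eq_natDegree hp0, hp, hdeg n]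
    rwa [hpn] at h
  have heval : ∀ t : ℝ, pc.eval (t : ℂ) = ((p.eval t : ℝ) : ℂ) := fun t =>
    eval_map_apply (f := Complex.ofRealHom) t
  have hdiv : ∀ t : ℝ, ((p.eval t : ℝ) : ℂ) = pc.eval κ + ((t : ℂ) - κ) * q.eval (t : ℂ) := by
    intro t
    rw [← heval]
    have h := congrArg (eval (t : ℂ)) (modByMonic_add_div pc (X - C κ))
    simpa [modByMonic_X_sub_C_eq_C_eval] using h.symm
  have hcont : Continuous fun t : ℝ => ((p.eval t : ℝ) : ℂ) :=
    Complex.continuous_ofReal.comp p.continuous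
  have hcden : Continuous fun t : ℝ => (t : ℂ) - κ :=
    Complex.continuous_ofReal.sub continuous_const
  have hsq : ∫ t : ℝ, ((p.eval t : ℝ) : ℂ) ^ 2 / ((t : ℂ) - κ) ∂μ = 0 := by
    have hfun : ∀ t : ℝ, ((p.eval t : ℝ) : ℂ) ^ 2 / ((t : ℂ) - κ)
        = pc.eval κ * (((p.eval t : ℝ) : ℂ) / ((t : ℂ) - κ))
          + ((p.eval t : ℝ) : ℂ) * q.eval (t : ℂ) := by
      intro t
      have := hne t
      field_simp
      rw [sq]
      nth_rewrite 2 [hdiv t]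
      ring
    simp_rw [hfun]
    rw [integral_add, integral_const_mul, hzero,
      integral_mul_eval_eq_zero hcomp p n (horth n) q hq]
    · simp
    · exact integrable_of_continuous_of_compact hcomp
        (continuous_const.mul (hcont.div hcden hne))
    · exact integrable_of_continuous_of_compact hcomp
        (hcont.mul (q.continuous.comp Complex.continuous_ofReal))
  have him : ∀ t : ℝ, (((p.eval t : ℝ) : ℂ) ^ 2 / ((t : ℂ) - κ)).im
      = κ.im * ((p.eval t) ^ 2 / Complex.normSq ((t : ℂ) - κ)) := by
    intro t
    rw [← Complex.ofReal_pow, Complex.div_im]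
    simp only [Complex.ofReal_im, Complex.ofReal_re, Complex.sub_im]
    ring
  have hint : ∫ t : ℝ, (p.eval t) ^ 2 / Complex.normSq ((t : ℂ) - κ) ∂μ = 0 := by
    have hI : Integrable (fun t : ℝ => ((p.eval t : ℝ) : ℂ) ^ 2 / ((t : ℂ) - κ)) μ :=
      integrable_of_continuous_of_compact hcomp ((hcont.pow 2).div hcden hne)
    have h : ∫ t : ℝ, (((p.eval t : ℝ) : ℂ) ^ 2 / ((t : ℂ) - κ)).im ∂μ = 0 := by
      have h' := integral_im hI
      simp only [RCLike.im_to_complex] at h'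
      rw [h', hsq, Complex.zero_im]
    simp_rw [him] at h
    rw [integral_const_mul] at h
    exact (mul_eq_zero.mp h).resolve_left hκ
  rw [integral_eq_zero_iff_of_nonneg
    (fun t => div_nonneg (sq_nonneg _) (Complex.normSq_nonneg _))
    (integrable_of_continuous_of_compact hcomp ((p.continuous.pow 2).div
      (Complex.continuous_normSq.comp hcden) fun t => by simpa using hne t))] at hint
  refine hp0 (eq_zero_of_ae_eval_eq_zero hinf p ?_)
  filter_upwards [hint] with t ht
  have hn : Complex.normSq ((t : ℂ) - κ) ≠ 0 := by simpa using hne t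
  simpa [hn, hne t] using ht
end

section
/- Assume (c_n) and (λ_n) are bounded, let κ ∈ ℂ be non-real, and let J and J_C(κ) be the bounded tridiagonal operators on ℓ² described in the context. Then the spectra (over ℂ) of J and of J_C(κ) coincide: σ(J_C(κ)) = σ(J). In particular the Christoffel transformation at a non-real point is isospectral and κ ∉ σ(J_C(κ)). -/
/-!
Write `r n = P (n+1) (κ) / P n (κ)`. The recurrence reads
`r (n+1) = κ - c (n+2) - lam (n+2) / r n`, and since `z ↦ -1/z` preserves the upper and the lower
half plane, `|Im (r n)| ≥ |Im κ|` for all `n` (`ratio_bounds`). Hence `r n` and `1 / r n` are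
bounded. Choose `α n` with `α n ^ 2 = - r n` and put `β n = √(lam (n+2)) / α n`. With the bounded
bidiagonal operators

  `A e_n = α n e_n + β n e_(n+1)`,  `B e_n = α n e_n + β (n-1) e_(n-1)`

one has `J - κ = A B`. The signs of the square roots `α n` can be fixed recursively so that also
`β n * α (n+1) = atil n`, and then `JC - κ = B A`.

As `J` is self-adjoint and `κ` is not real, `A B` is invertible, so `A` is surjective; `A` is
injective, being lower triangular with nonzero diagonal. Thus `A` is invertible and
`JC = A⁻¹ J A` is similar to `J`.
-/

open Polynomial

/-- The Hilbert space `ℓ²(ℕ, ℂ)`. -/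
local notation "H" => lp (fun _ : ℕ => ℂ) 2

lemma exists_weighted_comp (w : ℕ → ℂ) (M : ℝ) (hw : ∀ n, ‖w n‖ ≤ M) (σ : ℕ → ℕ)
    (hσ : Function.Injective σ) :
    ∃ T : H →L[ℂ] H, ∀ x n, T x n = w n * x (σ n) := by
  have hM : 0 ≤ M := (norm_nonneg _).trans (hw 0)
  have h2 : 0 < (2 : ENNReal).toReal := by norm_num
  have key : ∀ (x : H) (s : Finset ℕ),
      ∑ n ∈ s, ‖w n * x (σ n)‖ ^ (2 : ENNReal).toReal ≤ (M * ‖x‖) ^ (2 : ENNReal).toReal := by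
    intro x s
    calc ∑ n ∈ s, ‖w n * x (σ n)‖ ^ (2 : ENNReal).toReal
        ≤ ∑ n ∈ s, M ^ (2 : ENNReal).toReal * ‖x (σ n)‖ ^ (2 : ENNReal).toReal := by
          refine Finset.sum_le_sum fun n _ => ?_
          rw [norm_mul, Real.mul_rpow (norm_nonneg _) (norm_nonneg _)]
          gcongr
          exact hw n
      _ = M ^ (2 : ENNReal).toReal *
            ∑ m ∈ s.map ⟨σ, hσ⟩, ‖x m‖ ^ (2 : ENNReal).toReal := by
          rw [Finset.sum_map, Finset.mul_sum]
          rfl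
      _ ≤ M ^ (2 : ENNReal).toReal * ‖x‖ ^ (2 : ENNReal).toReal := by
          gcongr
          exact lp.sum_rpow_le_norm_rpow h2 x _
      _ = _ := (Real.mul_rpow hM (norm_nonneg _)).symm
  let L : H →ₗ[ℂ] H :=
    { toFun := fun x => ⟨fun n => w n * x (σ n), memℓp_gen' (key x)⟩
      map_add' := fun x y => by
        ext n
        exact mul_add _ _ _
      map_smul' := fun a x => by
        ext n
        exact mul_left_comm _ _ _ }
  refine ⟨L.mkContinuous M fun x => ?_, fun x n => rfl⟩
  exact lp.norm_le_of_forall_sum_le h2 (by positivity) (key x)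

/-- The weighted forward shift, obtained as the adjoint of a weighted backward shift. -/
lemma exists_weighted_shift (w : ℕ → ℂ) (M : ℝ) (hw : ∀ n, ‖w n‖ ≤ M) :
    ∃ T : H →L[ℂ] H, ∀ x, T x 0 = 0 ∧ ∀ n, T x (n + 1) = w n * x n := by
  obtain ⟨W, hW⟩ := exists_weighted_comp (fun n => star (w n)) M (by simpa using hw) Nat.succ
    Nat.succ_injective
  refine ⟨ContinuousLinearMap.adjoint W, fun x => ?_⟩
  have hc : ∀ (y : H) m, y m = inner ℂ (lp.single 2 m (1 : ℂ) : H) y := fun y m => by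
    rw [lp.inner_single_left]; simp
  have hW0 : W (lp.single 2 0 1) = 0 := by
    ext n
    rw [hW]; simp [lp.single_apply]
  have hW1 : ∀ m, W (lp.single 2 (m + 1) 1) = lp.single 2 m (star (w m)) := by
    intro m
    ext n
    rw [hW]
    by_cases h : n = m
    · subst h; simp
    · simp [lp.single_apply, h]
  refine ⟨?_, fun n => ?_⟩
  · rw [hc, ContinuousLinearMap.adjoint_inner_right, hW0, inner_zero_left]
  · rw [hc, ContinuousLinearMap.adjoint_inner_right, hW1, lp.inner_single_left]
    simp [mul_comm]

lemma clm_ext_basis (e : ℕ → H) (he : ∀ n, e n = lp.single 2 n 1) (S T : H →L[ℂ] H)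
    (h : ∀ n, S (e n) = T (e n)) : S = T := by
  refine lp.ext_continuousLinearMap (by norm_num) fun n => ?_
  ext1
  simpa [he] using h n

/-- The bidiagonal factors: `A` is lower and `B` upper bidiagonal, with the same entries. -/
lemma exists_bidiagonal (e : ℕ → H) (he : ∀ n, e n = lp.single 2 n 1) (α β : ℕ → ℂ) (M : ℝ)
    (hα : ∀ n, ‖α n‖ ≤ M) (hβ : ∀ n, ‖β n‖ ≤ M) (hα0 : ∀ n, α n ≠ 0) :
    ∃ A B : H →L[ℂ] H, Function.Injective A ∧
      (∀ n, A (e n) = α n • e n + β n • e (n + 1)) ∧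
      B (e 0) = α 0 • e 0 ∧ ∀ n, B (e (n + 1)) = α (n + 1) • e (n + 1) + β n • e n := by
  obtain ⟨D, hD⟩ := exists_weighted_comp α M hα id Function.injective_id
  obtain ⟨R, hR⟩ := exists_weighted_comp β M hβ Nat.succ Nat.succ_injective
  obtain ⟨S, hS⟩ := exists_weighted_shift β M hβ
  have hDe : ∀ n, D (e n) = α n • e n := by
    intro n
    ext m
    rw [hD, he]
    by_cases h : m = n
    · subst h; simp
    · simp [lp.single_apply, h]
  refine ⟨D + S, D + R, ?_, fun n => ?_, ?_, fun n => ?_⟩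
  · rw [injective_iff_map_eq_zero]
    intro x hx
    have hx' : ∀ n, D x n + S x n = 0 := fun n => by
      have := congrArg (fun y : H => y n) hx
      simpa using this
    ext n
    induction n with
    | zero => simpa [hD, (hS x).1, hα0] using hx' 0
    | succ n ih =>
      have h := hx' (n + 1)
      rw [hD, (hS x).2, ih] at h
      simpa [hα0] using h
  · rw [add_apply, hDe]
    congr 1
    ext m
    cases m with
    | zero => rw [(hS _).1, he]; simp [lp.single_apply]
    | succ m =>
      rw [(hS _).2, he, he]
      by_cases h : m = n
      · subst h; simp
      · simp [lp.single_apply, h]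
  · rw [add_apply, hDe]
    convert add_zero _
    ext m
    rw [hR, he]; simp [lp.single_apply]
  · rw [add_apply, hDe]
    congr 1
    ext m
    rw [hR, he, he]
    by_cases h : m = n
    · subst h; simp
    · simp [lp.single_apply, h]

/-- A bounded Jacobi operator with real entries is self-adjoint. -/
lemma jacobi_selfAdjoint (e : ℕ → H) (he : ∀ n, e n = lp.single 2 n 1) (a b : ℕ → ℝ)
    (J : H →L[ℂ] H) (hJ0 : J (e 0) = (b 0 : ℂ) • e 0 + (a 0 : ℂ) • e 1)
    (hJ : ∀ n, J (e (n + 1)) =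
      (a n : ℂ) • e n + (b (n + 1) : ℂ) • e (n + 1) + (a (n + 1) : ℂ) • e (n + 2)) :
    IsSelfAdjoint J := by
  have hin : ∀ m n, inner ℂ (e m) (e n) = if m = n then (1 : ℂ) else 0 := fun m n => by
    rw [he m, he n, lp.inner_single_left]
    by_cases h : m = n
    · subst h; simp
    · simp [lp.single_apply, h]
  have hc : ∀ (y : H) m, y m = inner ℂ (e m) y := fun y m => by
    rw [he, lp.inner_single_left]; simp
  refine clm_ext_basis e he _ _ fun n => ?_
  ext m
  rw [hc, hc, ContinuousLinearMap.star_eq_adjoint, ContinuousLinearMap.adjoint_inner_right]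
  have hlt : ∀ m n, m < n → inner ℂ (J (e m)) (e n) = inner ℂ (e m) (J (e n)) := by
    intro m n hmn
    obtain ⟨k, rfl⟩ : ∃ k, n = k + 1 := ⟨n - 1, by omega⟩
    cases m with
    | zero =>
      rw [hJ0, hJ]
      simp only [inner_add_left, inner_add_right, inner_smul_left, inner_smul_right, hin]
      rcases k with _ | k <;> simp
    | succ m =>
      rw [hJ, hJ]
      simp only [inner_add_left, inner_add_right, inner_smul_left, inner_smul_right, hin]
      by_cases h : m + 1 = k
      · subst h
        have h1 : m ≠ m + 1 + 1 := by omega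
        simp [h1]
      · have h1 : m ≠ k + 1 := by omega
        have h2 : m ≠ k := by omega
        simp [h, h1, h2]
  rcases lt_trichotomy m n with h | rfl | h
  · exact hlt m n h
  · cases m with
    | zero =>
      rw [hJ0]
      simp only [inner_add_left, inner_add_right, inner_smul_left, inner_smul_right, hin]
      simp
    | succ m =>
      rw [hJ]
      simp only [inner_add_left, inner_add_right, inner_smul_left, inner_smul_right, hin]
      simp
  · rw [← inner_conj_symm, ← hlt n m h, inner_conj_symm]

/-- The ratios `p (n + 1) / p n` are bounded away from `0`: for `l > 0` and real `b`, the map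
`z ↦ κ - b - l / z` sends the half plane containing `κ` into the points `w` of that half plane with
`|w.im| ≥ |κ.im|`, which is the induction step. -/
lemma ratio_bounds (c lam : ℕ → ℝ) (hlam : ∀ n, 2 ≤ n → 0 < lam n) (κ : ℂ) (hκ : κ.im ≠ 0)
    (p : ℕ → ℂ) (hp0 : p 0 = 1) (hp1 : p 1 = κ - c 1)
    (hp : ∀ n, p (n + 2) = (κ - c (n + 2)) * p (n + 1) - lam (n + 2) * p n) (n : ℕ) :
    p n ≠ 0 ∧ |κ.im| ≤ ‖p (n + 1) / p n‖ := by
  have of_im : ∀ z : ℂ, κ.im ^ 2 ≤ κ.im * z.im → |κ.im| ≤ ‖z‖ := by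
    intro z hz
    refine le_trans ?_ (Complex.abs_im_le_norm z)
    have h1 : |κ.im| * |κ.im| ≤ |κ.im| * |z.im| := by
      rw [← abs_mul, ← abs_mul]
      exact le_trans (by rw [abs_mul_self]; nlinarith) (le_abs_self _)
    exact le_of_mul_le_mul_left h1 (abs_pos.2 hκ)
  have main : p n ≠ 0 ∧ κ.im ^ 2 ≤ κ.im * (p (n + 1) / p n).im := by
    induction n with
    | zero => simp [hp0, hp1, sq]
    | succ n ih =>
      obtain ⟨h0, him⟩ := ih
      have hr : p (n + 1) / p n ≠ 0 := by
        intro h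
        have := of_im _ him
        rw [h, norm_zero] at this
        exact absurd this (not_le.2 (abs_pos.2 hκ))
      have h1 : p (n + 1) ≠ 0 := fun h => hr (by rw [h, zero_div])
      refine ⟨h1, ?_⟩
      have e1 : p (n + 1 + 1) / p (n + 1) =
          κ - c (n + 2) - lam (n + 2) * (p (n + 1) / p n)⁻¹ := by
        rw [hp]; field_simp
      rw [e1]
      generalize p (n + 1) / p n = r at *
      have hl := hlam (n + 2) (by omega)
      have hpos : 0 ≤ lam (n + 2) * (κ.im * r.im / Complex.normSq r) := by
        have : 0 ≤ κ.im * r.im := (sq_nonneg _).trans him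
        have := Complex.normSq_nonneg r
        positivity
      have e2 : κ.im * (κ - c (n + 2) - lam (n + 2) * r⁻¹).im =
          κ.im ^ 2 + lam (n + 2) * (κ.im * r.im / Complex.normSq r) := by
        simp [Complex.inv_im]
        ring
      rw [e2]
      linarith
  exact ⟨main.1, of_im _ main.2⟩

/-- The operator-theoretic core: if `J - κ = A B` is invertible and `A` is injective, then `A` is
invertible and conjugates `κ + B A` into `J`. -/
lemma spectrum_eq_of_factorization (J JC A B : H →L[ℂ] H) (κ : ℂ)
    (hA : Function.Injective A) (hκ : κ ∉ spectrum ℂ J)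
    (h1 : J - algebraMap ℂ _ κ = A * B) (h2 : JC - algebraMap ℂ _ κ = B * A) :
    spectrum ℂ JC = spectrum ℂ J := by
  have hu : IsUnit (A * B) := by
    rw [← h1, ← neg_sub]
    exact (spectrum.notMem_iff.1 hκ).neg
  obtain ⟨v, hv⟩ := hu
  have hr : A * (B * ↑v⁻¹) = 1 := by rw [← mul_assoc, ← hv, Units.mul_inv]
  have hl : (B * ↑v⁻¹) * A = 1 := by
    ext1 x
    apply hA
    have := congrArg (fun T : H →L[ℂ] H => T (A x)) hr
    simpa using this
  let u : (H →L[ℂ] H)ˣ := ⟨A, B * ↑v⁻¹, hr, hl⟩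
  have hconj : JC = ↑u⁻¹ * J * ↑u := by
    have hcomm : A * JC = J * A := by
      rw [sub_eq_iff_eq_add.1 h1, sub_eq_iff_eq_add.1 h2, mul_add, add_mul, mul_assoc,
        Algebra.commutes]
    rw [mul_assoc, Units.eq_inv_mul_iff_mul_eq]
    exact hcomm
  rw [hconj, spectrum.units_conjugate']

/-- Theorem 5.5: the Christoffel transformation at a non-real `κ` is
isospectral: `σ(J_C(κ)) = σ(J)`; in particular `κ ∉ σ(J_C(κ))`. -/
theorem stmt_16
    (c lam : ℕ → ℝ) (hlam : ∀ n, 2 ≤ n → 0 < lam n)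
    (hcb : ∃ B : ℝ, ∀ n, |c n| ≤ B) (hlb : ∃ B : ℝ, ∀ n, |lam n| ≤ B)
    (P : ℕ → Polynomial ℂ)
    (hP0 : P 0 = 1) (hP1 : P 1 = X - C (c 1 : ℂ))
    (hPrec : ∀ n : ℕ, P (n + 2) =
      (X - C (c (n + 2) : ℂ)) * P (n + 1) - C (lam (n + 2) : ℂ) * P n)
    (κ : ℂ) (hκ : κ.im ≠ 0)
    (e : ℕ → lp (fun _ : ℕ => ℂ) 2)
    (he : ∀ n, e n = lp.single 2 n 1)
    (J : lp (fun _ : ℕ => ℂ) 2 →L[ℂ] lp (fun _ : ℕ => ℂ) 2)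
    (hJ0 : J (e 0) = (c 1 : ℂ) • e 0 + (Real.sqrt (lam 2) : ℂ) • e 1)
    (hJ : ∀ n : ℕ, 1 ≤ n → J (e n) =
      (Real.sqrt (lam (n + 1)) : ℂ) • e (n - 1) + (c (n + 1) : ℂ) • e n +
        (Real.sqrt (lam (n + 2)) : ℂ) • e (n + 1))
    -- the off-diagonal entries of `J_C(κ)`: any square roots of `λ*_{n+2}(κ)`
    (atil : ℕ → ℂ)
    (hatil : ∀ n : ℕ, (atil n) ^ 2 =
      (lam (n + 2) : ℂ) * (P (n + 2)).eval κ * (P n).eval κ / ((P (n + 1)).eval κ) ^ 2)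
    (JC : lp (fun _ : ℕ => ℂ) 2 →L[ℂ] lp (fun _ : ℕ => ℂ) 2)
    (hJC0 : JC (e 0) =
      ((c 2 : ℂ) - (P 1).eval κ / (P 0).eval κ + (P 2).eval κ / (P 1).eval κ) • e 0 +
        atil 0 • e 1)
    (hJC : ∀ n : ℕ, 1 ≤ n → JC (e n) =
      atil (n - 1) • e (n - 1) +
        ((c (n + 2) : ℂ) - (P (n + 1)).eval κ / (P n).eval κ +
          (P (n + 2)).eval κ / (P (n + 1)).eval κ) • e n +
        atil n • e (n + 1)) :
    spectrum ℂ JC = spectrum ℂ J ∧ κ ∉ spectrum ℂ JC := by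
  obtain ⟨Bc, hBc⟩ := hcb
  obtain ⟨Bl, hBl⟩ := hlb
  obtain ⟨p, hpdef⟩ : ∃ p : ℕ → ℂ, ∀ n, (P n).eval κ = p n := ⟨_, fun _ => rfl⟩
  simp only [hpdef] at hatil hJC0 hJC
  have hp0 : p 0 = 1 := by rw [← hpdef, hP0]; simp
  have hp1 : p 1 = κ - c 1 := by rw [← hpdef, hP1]; simp
  have hp : ∀ n, p (n + 2) = (κ - c (n + 2)) * p (n + 1) - lam (n + 2) * p n := fun n => by
    rw [← hpdef, hPrec]; simp [hpdef]
  have hb := ratio_bounds c lam hlam κ hκ p hp0 hp1 hp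
  have hpne : ∀ n, p n ≠ 0 := fun n => (hb n).1
  obtain ⟨a, ha⟩ : ∃ a : ℕ → ℂ, ∀ n, a n = (Real.sqrt (lam (n + 2)) : ℂ) := ⟨_, fun _ => rfl⟩
  have ha2 : ∀ n, a n ^ 2 = lam (n + 2) := fun n => by
    rw [ha, ← Complex.ofReal_pow, Real.sq_sqrt (hlam _ (by omega)).le]
  have hane : ∀ n, a n ≠ 0 := fun n h => by
    have := ha2 n
    rw [h] at this
    have h3 := (hlam (n + 2) (by omega)).ne'
    exact h3 (by exact_mod_cast (by simpa using this.symm : (lam (n + 2) : ℂ) = 0))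
  -- The recursion for `α` fixes the signs so that `β n * α (n + 1) = atil n`.
  obtain ⟨α₀, hα₀⟩ := IsAlgClosed.exists_pow_nat_eq (-(p 1 / p 0)) two_pos
  obtain ⟨α, hαz, hαs⟩ : ∃ α : ℕ → ℂ, α 0 = α₀ ∧ ∀ n, α (n + 1) = atil n * α n / a n :=
    ⟨fun n => Nat.rec α₀ (fun n x => atil n * x / a n) n, rfl, fun _ => rfl⟩
  have hα2 : ∀ n, α n ^ 2 = -(p (n + 1) / p n) := by
    intro n
    induction n with
    | zero => rw [hαz, hα₀]
    | succ n ih =>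
      have h0 := hpne n
      have h1 := hpne (n + 1)
      have hl : (lam (n + 2) : ℂ) ≠ 0 := by rw [← ha2]; exact pow_ne_zero _ (hane n)
      rw [hαs, div_pow, mul_pow, ih, hatil, ha2]
      field_simp
  have hαne : ∀ n, α n ≠ 0 := fun n h => by
    have := hα2 n
    rw [h] at this
    have h3 := div_ne_zero (hpne (n + 1)) (hpne n)
    exact h3 (by simpa using this.symm)
  obtain ⟨β, hβ⟩ : ∃ β : ℕ → ℂ, ∀ n, β n = a n / α n := ⟨_, fun _ => rfl⟩
  have hαβ : ∀ n, a n = α n * β n := fun n => by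
    rw [hβ]; field_simp [hαne n]
  have hβα : ∀ n, atil n = β n * α (n + 1) := fun n => by
    have h1 := hαne n
    have h2 := hane n
    rw [hβ, hαs]; field_simp
  have hβ2 : ∀ n, β n ^ 2 = -(lam (n + 2) * p n / p (n + 1)) := fun n => by
    have h0 := hpne n
    have h1 := hpne (n + 1)
    rw [hβ, div_pow, hα2, ha2]; field_simp
  -- The recurrence for `p`, rewritten as the diagonal entries of `κ + A B` and of `κ + B A`.
  have hd0 : (c 1 : ℂ) = α 0 ^ 2 + κ := by
    rw [hα2, hp0, hp1]; ring
  have hd : ∀ n, (c (n + 2) : ℂ) = α (n + 1) ^ 2 + β n ^ 2 + κ := fun n => by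
    have h1 := hpne (n + 1)
    rw [hα2, hβ2, hp]; field_simp; ring
  have hdC : ∀ n, (c (n + 2) : ℂ) - p (n + 1) / p n + p (n + 2) / p (n + 1) =
      α n ^ 2 + β n ^ 2 + κ := fun n => by
    rw [hd, hα2 n, hα2 (n + 1)]; ring
  -- `β n ^ 2` is bounded because `r n` stays away from `0`; then so is `α n ^ 2`, by `hd`.
  have him : 0 < |κ.im| := abs_pos.2 hκ
  have hlamp : ∀ n, ‖(lam (n + 2) : ℂ)‖ ≤ Bl := fun n => by
    simpa using hBl (n + 2)
  have hβb : ∀ n, ‖β n‖ ^ 2 ≤ Bl / |κ.im| := fun n => by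
    rw [← norm_pow, hβ2, norm_neg, mul_div_assoc, norm_mul, ← inv_div (p (n + 1)), norm_inv,
      ← div_eq_mul_inv]
    exact div_le_div₀ ((norm_nonneg _).trans (hlamp n)) (hlamp n) him (hb n).2
  have hcp : ∀ n, ‖(c n : ℂ)‖ ≤ Bc := fun n => by simpa using hBc n
  have hαb : ∀ n, ‖α n‖ ^ 2 ≤ Bc + ‖κ‖ + Bl / |κ.im| := fun n => by
    have hnn : 0 ≤ Bl / |κ.im| := (sq_nonneg _).trans (hβb 0)
    rw [← norm_pow]
    cases n with
    | zero =>
      have : α 0 ^ 2 = c 1 - κ := by rw [hd0]; ring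
      rw [this]
      linarith [norm_sub_le (c 1 : ℂ) κ, hcp 1]
    | succ n =>
      have : α (n + 1) ^ 2 = c (n + 2) - κ - β n ^ 2 := by rw [hd]; ring
      rw [this]
      have h := hβb n
      rw [← norm_pow] at h
      linarith [norm_sub_le (c (n + 2) : ℂ) κ, norm_sub_le (c (n + 2) - κ : ℂ) (β n ^ 2),
        hcp (n + 2)]
  have hBc0 : 0 ≤ Bc := (norm_nonneg _).trans (hcp 0)
  obtain ⟨A, B, hAinj, hA, hB0, hB⟩ := exists_bidiagonal e he α β
    (Real.sqrt (Bc + ‖κ‖ + Bl / |κ.im|))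
    (fun n => Real.le_sqrt_of_sq_le (hαb n))
    (fun n => Real.le_sqrt_of_sq_le ((hβb n).trans (by linarith [norm_nonneg κ]))) hαne
  have hJ' : ∀ n, J (e (n + 1)) =
      a n • e n + (c (n + 2) : ℂ) • e (n + 1) + a (n + 1) • e (n + 2) := fun n => by
    rw [ha, ha]; exact hJ (n + 1) (by omega)
  have hsa : IsSelfAdjoint J :=
    jacobi_selfAdjoint e he (fun n => Real.sqrt (lam (n + 2))) (fun n => c (n + 1)) J hJ0
      fun n => hJ (n + 1) (by omega)
  have hκJ : κ ∉ spectrum ℂ J := fun h => hκ (hsa.im_eq_zero_of_mem_spectrum h)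
  have hfac : J - algebraMap ℂ _ κ = A * B := by
    refine clm_ext_basis e he _ _ fun n => ?_
    rw [sub_apply, mul_apply_eq_comp,
      ContinuousLinearMap.algebraMap_apply]
    cases n with
    | zero =>
      rw [hJ0, ← ha, hB0, map_smul, hA, hd0, hαβ]
      module
    | succ n =>
      rw [hJ', hB, map_add, map_smul, map_smul, hA, hA, hd, hαβ, hαβ]
      module
  have hfacC : JC - algebraMap ℂ _ κ = B * A := by
    refine clm_ext_basis e he _ _ fun n => ?_
    rw [sub_apply, mul_apply_eq_comp,
      ContinuousLinearMap.algebraMap_apply]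
    cases n with
    | zero =>
      have h := hdC 0
      simp only [zero_add] at h
      rw [hJC0, hA, map_add, map_smul, map_smul, hB0, hB, h, hβα]
      module
    | succ n =>
      rw [hJC (n + 1) (by omega), hA, map_add, map_smul, map_smul, hB, hB, hdC (n + 1), hβα, hβα,
        Nat.add_sub_cancel]
      module
  have hspec := spectrum_eq_of_factorization J JC A B κ hAinj hκJ hfac hfacC
  exact ⟨hspec, hspec ▸ hκJ⟩
end

section
/- Let κ ∈ ℂ be non-real and, for each n, let Ã_{n+1} ∈ ℂ be arbitrary and set T_{n+1} = P_{n+1} + Ã_{n+1}·P_n. Then for every n ≥ 1 there exist unique complex numbers α_n and β_n such that the polynomial identity T_{n+1}(z) − (z − α_n)·P_n(z) + β_n·(z − κ)·P*_{n−1}(κ,z) = 0 holds; explicitly, β_n = −λ_{n+1}·P_{n−1}(κ)/P_n(κ) and α_n = c_{n+1} − Ã_{n+1} + λ_{n+1}·P_{n−1}(κ)/P_n(κ). -/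
/-!
Write `n = m + 1`, `r = P_{m+1}(κ) / P_m(κ)`. Substituting the three-term recurrence for `P_{m+2}`
and the definition of the kernel polynomial, the left-hand side of the identity becomes
`(α - c_{m+2} + Ã + β) P_{m+1} - (λ_{m+2} + β r) P_m`. Since `P_{m+1}` and `P_m` have different
degrees they are linearly independent, so the identity holds iff both coefficients vanish, and this
determines `β = -λ_{m+2} / r` and then `α`.

Dividing by `r` requires `P_n(κ) ≠ 0` for non-real `κ`. This follows from the
Christoffel–Darboux-type quantity `D_n = Im (P_{n+1}(κ) · conj P_n(κ))`, which satisfies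
`D_n = Im κ · |P_n(κ)|² + λ_{n+1} D_{n-1}` and `D_0 = Im κ`, so that `Im κ · D_n > 0`.
-/

open Polynomial

/-- Positivity of `Im κ · Im (P_{n+1}(κ) · conj P_n(κ))`, with the imaginary part written out. -/
lemma im_mul_wronskian_pos (c lam : ℕ → ℝ) (hlam : ∀ n, 2 ≤ n → 0 < lam n)
    (P : ℕ → Polynomial ℂ)
    (hP0 : P 0 = 1) (hP1 : P 1 = X - C (c 1 : ℂ))
    (hPrec : ∀ n : ℕ, P (n + 2) =
      (X - C (c (n + 2) : ℂ)) * P (n + 1) - C (lam (n + 2) : ℂ) * P n)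
    (κ : ℂ) (hκ : κ.im ≠ 0) (n : ℕ) :
    0 < κ.im * (((P (n + 1)).eval κ).im * ((P n).eval κ).re -
      ((P (n + 1)).eval κ).re * ((P n).eval κ).im) := by
  induction n with
  | zero =>
    simpa [hP0, hP1] using hκ
  | succ n ih =>
    have hl := mul_pos (hlam (n + 2) (by omega)) ih
    have hsq : 0 ≤ κ.im ^ 2 * (((P (n + 1)).eval κ).re ^ 2 + ((P (n + 1)).eval κ).im ^ 2) := by
      positivity
    rw [hPrec n]
    simp only [eval_sub, eval_mul, eval_X, eval_C, Complex.sub_re, Complex.sub_im,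
      Complex.mul_re, Complex.mul_im, Complex.ofReal_re, Complex.ofReal_im]
    linarith

lemma eval_ne_zero_of_im_ne_zero (c lam : ℕ → ℝ) (hlam : ∀ n, 2 ≤ n → 0 < lam n)
    (P : ℕ → Polynomial ℂ)
    (hP0 : P 0 = 1) (hP1 : P 1 = X - C (c 1 : ℂ))
    (hPrec : ∀ n : ℕ, P (n + 2) =
      (X - C (c (n + 2) : ℂ)) * P (n + 1) - C (lam (n + 2) : ℂ) * P n)
    (κ : ℂ) (hκ : κ.im ≠ 0) (n : ℕ) : (P n).eval κ ≠ 0 := by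
  intro h
  have := im_mul_wronskian_pos c lam hlam P hP0 hP1 hPrec κ hκ n
  simp [h] at this

lemma monic_and_natDegree_eq (c lam : ℕ → ℝ) (P : ℕ → Polynomial ℂ)
    (hP0 : P 0 = 1) (hP1 : P 1 = X - C (c 1 : ℂ))
    (hPrec : ∀ n : ℕ, P (n + 2) =
      (X - C (c (n + 2) : ℂ)) * P (n + 1) - C (lam (n + 2) : ℂ) * P n) (n : ℕ) :
    (P n).Monic ∧ (P n).natDegree = n := by
  induction n using Nat.twoStepInduction with
  | zero => simp [hP0]
  | one => rw [hP1]; exact ⟨monic_X_sub_C _, natDegree_X_sub_C _⟩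
  | more n ih0 ih1 =>
    have hm : ((X - C (c (n + 2) : ℂ)) * P (n + 1)).Monic := (monic_X_sub_C _).mul ih1.1
    have hd : ((X - C (c (n + 2) : ℂ)) * P (n + 1)).natDegree = n + 2 := by
      rw [(monic_X_sub_C _).natDegree_mul ih1.1, natDegree_X_sub_C, ih1.2]; omega
    have hlt : (C (lam (n + 2) : ℂ) * P n).natDegree <
        ((X - C (c (n + 2) : ℂ)) * P (n + 1)).natDegree := by
      have := natDegree_C_mul_le (lam (n + 2) : ℂ) (P n)
      omega
    rw [hPrec n]
    exact ⟨hm.sub_of_left (degree_lt_degree hlt),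
      by rw [natDegree_sub_eq_left_of_natDegree_lt hlt, hd]⟩

/-- Proposition 6.1: for any quasi-orthogonal polynomial
`T_{n+1} = P_{n+1} + Ã_{n+1}·P_n` of order one and any non-real `κ`, there are
unique constants `αₙ, βₙ` with
`T_{n+1}(z) − (z − αₙ)·Pₙ(z) + βₙ·(z − κ)·P*_{n-1}(κ,z) = 0`; explicitly
`βₙ = −λ_{n+1}·P_{n-1}(κ)/Pₙ(κ)` and
`αₙ = c_{n+1} − Ã_{n+1} + λ_{n+1}·P_{n-1}(κ)/Pₙ(κ)`. -/
theorem stmt_18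
    (c lam : ℕ → ℝ) (hlam : ∀ n, 2 ≤ n → 0 < lam n)
    (P : ℕ → Polynomial ℂ)
    (hP0 : P 0 = 1) (hP1 : P 1 = X - C (c 1 : ℂ))
    (hPrec : ∀ n : ℕ, P (n + 2) =
      (X - C (c (n + 2) : ℂ)) * P (n + 1) - C (lam (n + 2) : ℂ) * P n)
    (κ : ℂ) (hκ : κ.im ≠ 0)
    (Ps : ℕ → Polynomial ℂ)
    (hPs : ∀ n : ℕ, (X - C κ) * Ps n =
      P (n + 1) - C ((P (n + 1)).eval κ / (P n).eval κ) * P n) :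
    ∀ n : ℕ, 1 ≤ n → ∀ Atil : ℂ,
      ((P (n + 1) + C Atil * P n) -
        (X - C ((c (n + 1) : ℂ) - Atil +
          (lam (n + 1) : ℂ) * (P (n - 1)).eval κ / (P n).eval κ)) * P n +
        C (-((lam (n + 1) : ℂ) * (P (n - 1)).eval κ / (P n).eval κ)) *
          (X - C κ) * Ps (n - 1) = 0) ∧
      (∀ α β : ℂ,
        (P (n + 1) + C Atil * P n) - (X - C α) * P n +
          C β * (X - C κ) * Ps (n - 1) = 0 →
        α = (c (n + 1) : ℂ) - Atil +
          (lam (n + 1) : ℂ) * (P (n - 1)).eval κ / (P n).eval κ ∧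
        β = -((lam (n + 1) : ℂ) * (P (n - 1)).eval κ / (P n).eval κ)) := by
  intro n hn Atil
  obtain ⟨m, rfl⟩ : ∃ m, n = m + 1 := ⟨n - 1, by omega⟩
  simp only [Nat.add_sub_cancel]
  have hp := eval_ne_zero_of_im_ne_zero c lam hlam P hP0 hP1 hPrec κ hκ m
  have hq := eval_ne_zero_of_im_ne_zero c lam hlam P hP0 hP1 hPrec κ hκ (m + 1)
  have key : ∀ α β : ℂ, (P (m + 1 + 1) + C Atil * P (m + 1)) - (X - C α) * P (m + 1) +
      C β * (X - C κ) * Ps m =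
      C (α - c (m + 1 + 1) + Atil + β) * P (m + 1) -
      C (lam (m + 1 + 1) + β * ((P (m + 1)).eval κ / (P m).eval κ)) * P m := by
    intro α β
    rw [mul_assoc (C β), hPs m, hPrec m]
    simp only [map_add, map_sub, map_mul]
    ring
  constructor
  · rw [key]
    have h1 : (c (m + 1 + 1) : ℂ) - Atil +
        (lam (m + 1 + 1) : ℂ) * (P m).eval κ / (P (m + 1)).eval κ - c (m + 1 + 1) + Atil +
        -((lam (m + 1 + 1) : ℂ) * (P m).eval κ / (P (m + 1)).eval κ) = 0 := by ring
    have h2 : (lam (m + 1 + 1) : ℂ) + -((lam (m + 1 + 1) : ℂ) * (P m).eval κ /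
        (P (m + 1)).eval κ) * ((P (m + 1)).eval κ / (P m).eval κ) = 0 := by
      field_simp
      ring
    rw [h1, h2]
    simp
  · intro α β h
    rw [key] at h
    obtain ⟨hm1, hd1⟩ := monic_and_natDegree_eq c lam P hP0 hP1 hPrec (m + 1)
    obtain ⟨-, hd0⟩ := monic_and_natDegree_eq c lam P hP0 hP1 hPrec m
    have hc1 : (P (m + 1)).coeff (m + 1) = 1 := by
      simpa [Monic, leadingCoeff, hd1] using hm1
    have hc0 : (P m).coeff (m + 1) = 0 := coeff_eq_zero_of_natDegree_lt (by omega)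
    -- The coefficient of degree `m + 1` isolates the multiplier of `P (m + 1)`; evaluating what
    -- remains at `κ` gives the other one.
    have ha : α - c (m + 1 + 1) + Atil + β = 0 := by
      have := congrArg (fun p => coeff p (m + 1)) h
      simpa only [coeff_sub, coeff_C_mul, hc1, hc0, mul_one, mul_zero, sub_zero, coeff_zero]
        using this
    have hb : (lam (m + 1 + 1) : ℂ) + β * ((P (m + 1)).eval κ / (P m).eval κ) = 0 := by
      have := congrArg (eval κ) h
      rw [ha] at this
      simp only [map_zero, zero_mul, zero_sub, eval_neg, eval_mul, eval_C, eval_zero,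
        neg_eq_zero] at this
      exact (mul_eq_zero.mp this).resolve_right hp
    have hβ : β = -((lam (m + 1 + 1) : ℂ) * (P m).eval κ / (P (m + 1)).eval κ) := by
      field_simp at hb ⊢
      linear_combination hb
    refine ⟨?_, hβ⟩
    linear_combination ha - hβ
end

section
/- Let κ₁, κ₂ ∈ ℂ with Im κ₁ > 0 and Im κ₂ < 0, and for each n let C̃_n, D̃_n ∈ ℂ be arbitrary and set S_{n+1} = P_{n+1} + C̃_n·P_n + D̃_n·P_{n−1}. Then for every n ≥ 1 the quantity (P*_n(κ₁,κ₂)/P*_{n−1}(κ₁,κ₂))·(P_n(κ₁)/P_{n−1}(κ₁)) is different from λ_{n+1}, and there exist unique complex numbers ρ_n, γ_n, υ_n such that the polynomial identity S_{n+1}(z) − (ρ_n·z − γ_n)·P_n(z) + υ_n·(z − κ₁)·(z − κ₂)·P**_{n−1}(κ₁,κ₂,z) = 0 holds; explicitly υ_n = (λ_{n+1} − D̃_n)/((P*_n(κ₁,κ₂)/P*_{n−1}(κ₁,κ₂))·(P_n(κ₁)/P_{n−1}(κ₁)) − λ_{n+1}), ρ_n = 1 + υ_n, and γ_n = ρ_n·c_{n+1}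 + υ_n·(P_{n+1}(κ₁)/P_n(κ₁) + P*_n(κ₁,κ₂)/P*_{n−1}(κ₁,κ₂)) − C̃_n. -/
open Polynomial

/-!
Write `aₙ = Pₙ₊₁(κ₁)/Pₙ(κ₁)`, `rₙ = Pₙ₊₁(κ₂)/Pₙ(κ₂)` and `bₙ = P*ₙ(κ₁,κ₂)/P*ₙ₋₁(κ₁,κ₂)`.
Unfolding the two kernel transforms gives
`(z - κ₁)(z - κ₂) P**ₙ₋₁ = Pₙ₊₁ - (aₙ + bₙ) Pₙ + bₙ aₙ₋₁ Pₙ₋₁`.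
Eliminating `Pₙ₊₁` by the three-term recurrence, the required identity takes the form
`(linear) · Pₙ + (constant) · Pₙ₋₁ = 0`; comparing degrees (`coeffs_eq_zero`), it holds iff the
linear polynomial and the constant both vanish. The constant is
`Dₙ - λₙ₊₁ + υ (bₙ aₙ₋₁ - λₙ₊₁)`, so existence and uniqueness reduce to `bₙ aₙ₋₁ ≠ λₙ₊₁`.

The recurrence `aₙ = κ₁ - cₙ₊₁ - λₙ₊₁/aₙ₋₁` preserves the half-plane containing `κ₁`, and likewise
for `rₙ` and `κ₂` (`eval_ne_zero_and_im_ratio`), so `aₙ ≠ rₙ` and both are nonzero. As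
`(κ₂ - κ₁) P*ₙ(κ₁,κ₂) = Pₙ(κ₂) (rₙ - aₙ)`, one finds
`bₙ aₙ₋₁ - λₙ₊₁ = rₙ₋₁ aₙ₋₁ (κ₂ - κ₁)/(rₙ₋₁ - aₙ₋₁) ≠ 0`.
-/

/-- The ratio `Pₙ₊₁(κ)/Pₙ(κ)` lies in the same open half-plane as the non-real point `κ`. -/
lemma eval_ne_zero_and_im_ratio
    (c lam : ℕ → ℝ) (hlam : ∀ n, 2 ≤ n → 0 < lam n)
    (P : ℕ → Polynomial ℂ)
    (hP0 : P 0 = 1) (hP1 : P 1 = X - C (c 1 : ℂ))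
    (hPrec : ∀ n : ℕ, P (n + 2) =
      (X - C (c (n + 2) : ℂ)) * P (n + 1) - C (lam (n + 2) : ℂ) * P n)
    (κ : ℂ) (hκ : κ.im ≠ 0) (n : ℕ) :
    (P n).eval κ ≠ 0 ∧ 0 < κ.im * ((P (n + 1)).eval κ / (P n).eval κ).im := by
  have hsq : 0 < κ.im * κ.im := mul_self_pos.mpr hκ
  induction n with
  | zero => simpa [hP0, hP1] using hκ
  | succ n ih =>
    obtain ⟨h0, h1⟩ := ih
    have hne : (P (n + 1)).eval κ ≠ 0 := by
      intro h
      simp [h] at h1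
    refine ⟨hne, ?_⟩
    set q := (P (n + 1)).eval κ / (P n).eval κ with hq
    have hq0 : q ≠ 0 := div_ne_zero hne h0
    have hr : (P (n + 1 + 1)).eval κ / (P (n + 1)).eval κ
        = κ - (c (n + 2) : ℂ) - (lam (n + 2) : ℂ) * q⁻¹ := by
      rw [hPrec n, hq]
      simp only [eval_sub, eval_mul, eval_X, eval_C]
      field_simp
    have him : (κ - (c (n + 2) : ℂ) - (lam (n + 2) : ℂ) * q⁻¹).im
        = κ.im + lam (n + 2) * (q.im / Complex.normSq q) := by
      simp [Complex.sub_im, Complex.mul_im, Complex.inv_im]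
      ring
    rw [hr, him]
    have hl := hlam (n + 2) (by omega)
    have hn : 0 < Complex.normSq q := Complex.normSq_pos.mpr hq0
    have : 0 < lam (n + 2) * (κ.im * q.im / Complex.normSq q) := by positivity
    calc 0 < κ.im * κ.im + lam (n + 2) * (κ.im * q.im / Complex.normSq q) := by positivity
      _ = _ := by ring

lemma monic_natDegree
    (c lam : ℕ → ℝ)
    (P : ℕ → Polynomial ℂ)
    (hP0 : P 0 = 1) (hP1 : P 1 = X - C (c 1 : ℂ))
    (hPrec : ∀ n : ℕ, P (n + 2) =
      (X - C (c (n + 2) : ℂ)) * P (n + 1) - C (lam (n + 2) : ℂ) * P n) (n : ℕ) :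
    ((P n).Monic ∧ (P n).natDegree = n) ∧
      ((P (n + 1)).Monic ∧ (P (n + 1)).natDegree = n + 1) := by
  induction n with
  | zero =>
    simp only [zero_add, hP0, hP1]
    exact ⟨⟨monic_one, natDegree_one⟩, monic_X_sub_C _, natDegree_X_sub_C _⟩
  | succ n ih =>
    obtain ⟨⟨hm0, hd0⟩, hm1, hd1⟩ := ih
    refine ⟨⟨hm1, hd1⟩, ?_⟩
    have hm : ((X - C (c (n + 2) : ℂ)) * P (n + 1)).Monic := (monic_X_sub_C _).mul hm1
    have hd : ((X - C (c (n + 2) : ℂ)) * P (n + 1)).natDegree = n + 2 := by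
      rw [(monic_X_sub_C _).natDegree_mul hm1, natDegree_X_sub_C, hd1]
      ring
    have hle : (C (lam (n + 2) : ℂ) * P n).natDegree ≤ n := (natDegree_C_mul_le _ _).trans hd0.le
    have hlt : (C (lam (n + 2) : ℂ) * P n).natDegree
        < ((X - C (c (n + 2) : ℂ)) * P (n + 1)).natDegree := by omega
    rw [show n + 1 + 1 = n + 2 from rfl, hPrec n]
    exact ⟨hm.sub_of_left (degree_lt_degree hlt),
      (natDegree_sub_eq_left_of_natDegree_lt hlt).trans hd⟩

/-- A vanishing combination `(s z + t) Q + w R` with `Q`, `R` monic and `deg R < deg Q` is trivial. -/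
lemma coeffs_eq_zero (Q R : Polynomial ℂ) (hQ : Q.Monic) (hR : R.Monic)
    (hlt : R.natDegree < Q.natDegree) (s t w : ℂ)
    (h : (C s * X + C t) * Q + C w * R = 0) : s = 0 ∧ t = 0 ∧ w = 0 := by
  have hlin : C s * X + C t = 0 := by
    by_contra hne
    have h1 : (C s * X + C t) * Q = -(C w * R) := eq_neg_of_add_eq_zero_left h
    have h2 := congrArg natDegree h1
    rw [natDegree_neg, mul_comm, hQ.natDegree_mul' hne] at h2
    have h3 := natDegree_C_mul_le w R
    omega
  have hs : s = 0 := by simpa using congrArg (fun p => coeff p 1) hlin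
  have ht : t = 0 := by simpa using congrArg (fun p => coeff p 0) hlin
  refine ⟨hs, ht, ?_⟩
  rw [hlin, zero_mul, zero_add] at h
  simpa [hR.ne_zero] using h

/-- Theorem 6.3: for any quasi-orthogonal polynomial
`S_{n+1} = P_{n+1} + C̃ₙ·Pₙ + D̃ₙ·P_{n-1}` of order two and `Im κ₁ > 0`,
`Im κ₂ < 0`, the quantity `(P*ₙ(κ₁,κ₂)/P*_{n-1}(κ₁,κ₂))·(Pₙ(κ₁)/P_{n-1}(κ₁))`
differs from `λ_{n+1}`, and there are unique constants `ρₙ, γₙ, υₙ` with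
`S_{n+1}(z) − (ρₙ·z − γₙ)·Pₙ(z) + υₙ·(z − κ₁)·(z − κ₂)·P**_{n-1}(κ₁,κ₂,z) = 0`,
given explicitly as in the paper. -/
theorem stmt_19
    (c lam : ℕ → ℝ) (hlam : ∀ n, 2 ≤ n → 0 < lam n)
    (P : ℕ → Polynomial ℂ)
    (hP0 : P 0 = 1) (hP1 : P 1 = X - C (c 1 : ℂ))
    (hPrec : ∀ n : ℕ, P (n + 2) =
      (X - C (c (n + 2) : ℂ)) * P (n + 1) - C (lam (n + 2) : ℂ) * P n)
    (κ₁ κ₂ : ℂ) (hκ₁ : 0 < κ₁.im) (hκ₂ : κ₂.im < 0)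
    (Ps : ℕ → Polynomial ℂ)
    (hPs : ∀ n : ℕ, (X - C κ₁) * Ps n =
      P (n + 1) - C ((P (n + 1)).eval κ₁ / (P n).eval κ₁) * P n)
    (Pss : ℕ → Polynomial ℂ)
    (hPss : ∀ n : ℕ, (X - C κ₂) * Pss n =
      Ps (n + 1) - C ((Ps (n + 1)).eval κ₂ / (Ps n).eval κ₂) * Ps n) :
    ∀ n : ℕ, 1 ≤ n → ∀ Ct Dt : ℂ,
      ((Ps n).eval κ₂ / (Ps (n - 1)).eval κ₂) *
          ((P n).eval κ₁ / (P (n - 1)).eval κ₁) ≠ (lam (n + 1) : ℂ) ∧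
      (let υ : ℂ := ((lam (n + 1) : ℂ) - Dt) /
          (((Ps n).eval κ₂ / (Ps (n - 1)).eval κ₂) *
            ((P n).eval κ₁ / (P (n - 1)).eval κ₁) - (lam (n + 1) : ℂ));
       let ρ : ℂ := 1 + υ;
       let γ : ℂ := ρ * (c (n + 1) : ℂ) +
          υ * ((P (n + 1)).eval κ₁ / (P n).eval κ₁ +
            (Ps n).eval κ₂ / (Ps (n - 1)).eval κ₂) - Ct;
       ((P (n + 1) + C Ct * P n + C Dt * P (n - 1)) -
          (C ρ * X - C γ) * P n +
          C υ * (X - C κ₁) * (X - C κ₂) * Pss (n - 1) = 0) ∧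
       (∀ ρ' γ' υ' : ℂ,
          (P (n + 1) + C Ct * P n + C Dt * P (n - 1)) -
            (C ρ' * X - C γ') * P n +
            C υ' * (X - C κ₁) * (X - C κ₂) * Pss (n - 1) = 0 →
          ρ' = ρ ∧ γ' = γ ∧ υ' = υ)) := by
  intro n hn Ct Dt
  obtain ⟨m, rfl⟩ : ∃ m, n = m + 1 := ⟨n - 1, by omega⟩
  simp only [Nat.add_sub_cancel]
  have key₁ := eval_ne_zero_and_im_ratio c lam hlam P hP0 hP1 hPrec κ₁ hκ₁.ne'
  have key₂ := eval_ne_zero_and_im_ratio c lam hlam P hP0 hP1 hPrec κ₂ hκ₂.ne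
  have hκ : κ₂ - κ₁ ≠ 0 := by
    intro h
    rw [sub_eq_zero.mp h] at hκ₂
    linarith
  have hPsev : ∀ k, (κ₂ - κ₁) * (Ps k).eval κ₂ =
      (P (k + 1)).eval κ₂ - (P (k + 1)).eval κ₁ / (P k).eval κ₁ * (P k).eval κ₂ := by
    intro k
    simpa using congrArg (eval κ₂) (hPs k)
  have hPsne : ∀ k, (Ps k).eval κ₂ ≠ 0 := by
    intro k h
    have h1 := hPsev k
    rw [h, mul_zero] at h1
    have h2 : (P (k + 1)).eval κ₂ / (P k).eval κ₂ = (P (k + 1)).eval κ₁ / (P k).eval κ₁ := by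
      rw [div_eq_iff (key₂ k).1]
      exact (sub_eq_zero.mp h1.symm)
    have h3 := (key₂ k).2
    rw [h2] at h3
    have h4 := pos_of_mul_pos_right (key₁ k).2 hκ₁.le
    exact absurd h3 (not_lt.mpr (mul_nonpos_of_nonpos_of_nonneg hκ₂.le h4.le))
  have hne : ((Ps (m + 1)).eval κ₂ / (Ps m).eval κ₂) *
      ((P (m + 1)).eval κ₁ / (P m).eval κ₁) - (lam (m + 1 + 1) : ℂ) ≠ 0 := by
    have hval : ((Ps (m + 1)).eval κ₂ / (Ps m).eval κ₂) *
        ((P (m + 1)).eval κ₁ / (P m).eval κ₁) - (lam (m + 1 + 1) : ℂ) =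
        (P (m + 1)).eval κ₂ * ((P (m + 1)).eval κ₁ / (P m).eval κ₁) / (Ps m).eval κ₂ := by
      have e0 := hPsev m
      have e1 := hPsev (m + 1)
      have r1 := congrArg (eval κ₁) (hPrec m)
      have r2 := congrArg (eval κ₂) (hPrec m)
      simp only [eval_sub, eval_mul, eval_X, eval_C] at r1 r2
      rw [show m + 1 + 1 = m + 2 from rfl] at *
      rw [r1, r2] at e1
      have n0 := (key₁ m).1
      have n1 := (key₁ (m + 1)).1
      have s0 := hPsne m
      field_simp at e0 e1 ⊢
      apply mul_left_cancel₀ hκ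
      linear_combination e1 - (lam (m + 2) : ℂ) * e0
    rw [hval]
    exact div_ne_zero (mul_ne_zero (key₂ (m + 1)).1 (div_ne_zero (key₁ (m + 1)).1 (key₁ m).1))
      (hPsne m)
  refine ⟨sub_ne_zero.mp hne, ?_⟩
  set a' := (P (m + 1)).eval κ₁ / (P m).eval κ₁ with ha'
  set a := (P (m + 1 + 1)).eval κ₁ / (P (m + 1)).eval κ₁ with ha
  set b := (Ps (m + 1)).eval κ₂ / (Ps m).eval κ₂ with hb
  -- With `n = m + 1`: the left-hand side of the identity in terms of `Pₙ` and `Pₙ₋₁` only.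
  have expand : ∀ ρ γ υ : ℂ,
      (P (m + 1 + 1) + C Ct * P (m + 1) + C Dt * P m) - (C ρ * X - C γ) * P (m + 1) +
        C υ * (X - C κ₁) * (X - C κ₂) * Pss m =
      (C (1 + υ - ρ) * X +
          C (Ct - (c (m + 1 + 1) : ℂ) + γ - υ * ((c (m + 1 + 1) : ℂ) + a + b))) * P (m + 1) +
        C (Dt - (lam (m + 1 + 1) : ℂ) + υ * (b * a' - (lam (m + 1 + 1) : ℂ))) * P m := by
    intro ρ γ υ
    have e0 := hPs m
    have e1 := hPs (m + 1)
    have e2 := hPss m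
    have r := hPrec m
    rw [← ha'] at e0
    rw [← ha] at e1
    rw [← hb] at e2
    rw [show m + 1 + 1 = m + 2 from rfl] at *
    simp only [C_add, C_sub, C_mul, C_1]
    linear_combination (C υ * (X - C κ₁)) * e2 + C υ * e1 - C υ * C b * e0 + (1 + C υ) * r
  obtain ⟨⟨hm0, hd0⟩, hm1, hd1⟩ := monic_natDegree c lam P hP0 hP1 hPrec m
  have hυ : ((lam (m + 1 + 1) : ℂ) - Dt) / (b * a' - (lam (m + 1 + 1) : ℂ)) *
      (b * a' - (lam (m + 1 + 1) : ℂ)) = (lam (m + 1 + 1) : ℂ) - Dt :=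
    div_mul_cancel₀ _ hne
  generalize ((lam (m + 1 + 1) : ℂ) - Dt) / (b * a' - (lam (m + 1 + 1) : ℂ)) = υ at hυ ⊢
  constructor
  · rw [expand]
    have h2 : Ct - (c (m + 1 + 1) : ℂ) +
        ((1 + υ) * (c (m + 1 + 1) : ℂ) + υ * (a + b) - Ct) -
          υ * ((c (m + 1 + 1) : ℂ) + a + b) = 0 := by
      ring
    have h3 : Dt - (lam (m + 1 + 1) : ℂ) + υ * (b * a' - (lam (m + 1 + 1) : ℂ)) = 0 := by
      rw [hυ]
      ring
    rw [sub_self, h2, h3]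
    simp
  · intro ρ' γ' υ' h
    rw [expand] at h
    obtain ⟨h1, h2, h3⟩ := coeffs_eq_zero _ _ hm1 hm0 (by omega) _ _ _ h
    have hu : υ' = υ := by
      apply mul_right_cancel₀ hne
      linear_combination h3 - hυ
    subst hu
    refine ⟨?_, ?_, rfl⟩
    · linear_combination -h1
    · linear_combination h2
end
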